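/- arXiv:2211.12802 — 2 statements merged into one kernel-verified Lean document; each statement's English description precedes it below -/
import Mathlib

section
/- Let f: ℝ^n → ℝ^n, n ≥ 2, be a homeomorphism, let 1 ≤ p < n, and suppose K^{fine}_f ∈ L^{p*(n-1)/n}_{loc}(ℝ^n) with p* = np/(n-p), and K^{fine}_f < ∞ outside a set E of σ-finite ℋ^{n-1}-measure. Then f ∈ W^{1,p}_{loc}(ℝ^n; ℝ^n). -/
open MeasureTheory Metric Set Filter ENNReal NNReal Topology

noncomputable section

/-- Euclidean space `ℝⁿ`. -/
abbrev En (n : ℕ) : Type := EuclideanSpace ℝ (Fin n)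

variable {n : ℕ}

/-- `g` is the weak (distributional) gradient of `u : ℝⁿ → ℝ` on all of `ℝⁿ`. -/
def IsWeakGrad (u : En n → ℝ) (g : En n → (En n →L[ℝ] ℝ)) : Prop :=
  ∀ φ : En n → ℝ, ContDiff ℝ 1 φ → HasCompactSupport φ →
    ∀ v : En n, ∫ x, u x * fderiv ℝ φ x v = - ∫ x, φ x * g x v

/-- The Sobolev 1-capacity: infimum of `W^{1,1}` norms of functions `u ≥ 1` on a
neighborhood of `A`. -/
def cap1 (A : Set (En n)) : ℝ≥0∞ :=
  sInf { c : ℝ≥0∞ | ∃ u : En n → ℝ, ∃ g : En n → (En n →L[ℝ] ℝ),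
    Integrable u ∧ Integrable (fun x => ‖g x‖) ∧ IsWeakGrad u g ∧
    (∃ V : Set (En n), IsOpen V ∧ A ⊆ V ∧ ∀ x ∈ V, 1 ≤ u x) ∧
    c = ENNReal.ofReal ((∫ x, |u x|) + ∫ x, ‖g x‖) }

/-- A set `U ⊆ ℝⁿ` is 1-finely open. -/
def FinelyOpen1 (U : Set (En n)) : Prop :=
  ∀ x ∈ U, Tendsto (fun r : ℝ => cap1 (Uᶜ ∩ ball x r) / ENNReal.ofReal (r ^ (n - 1)))
    (𝓝[>] 0) (𝓝 0)

/-- The relaxed quasiconformality quotient `K_{f,U}(x,r)`. -/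
def KfU (f : En n → En n) (U : Set (En n)) (x : En n) (r : ℝ) : ℝ≥0∞ :=
  if volume (f '' ball x r) = 0 then ∞
  else (EMetric.diam (f '' (ball x r ∩ U)) ^ n / volume (f '' ball x r)) ^ (((n : ℝ) - 1)⁻¹)

/-- Fine quasiconformal dilatation `K_f^fine(x)`. -/
def Kfine (f : En n → En n) (x : En n) : ℝ≥0∞ :=
  ⨅ (U : Set (En n)) (_ : FinelyOpen1 U) (_ : x ∈ U),
    Filter.limsup (fun r => KfU f U x r) (𝓝[>] 0)

/-- Metric quasiconformal dilatation `K_f(x)`. -/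
def Kmetric (f : En n → En n) (x : En n) : ℝ≥0∞ :=
  Filter.limsup (fun r => KfU f univ x r) (𝓝[>] 0)

/-- Volume derivative (Jacobian) `J_f(x)`. -/
def Jvol (f : En n → En n) (x : En n) : ℝ≥0∞ :=
  Filter.limsup (fun r => volume (f '' ball x r) / volume (ball x r)) (𝓝[>] 0)

/-- `g` is the weak gradient of the mapping `f : ℝⁿ → ℝⁿ` on the open set `Ω`. -/
def HasWeakGradOn (f : En n → En n) (g : En n → (En n →L[ℝ] En n)) (Ω : Set (En n)) : Prop :=
  ∀ φ : En n → ℝ, ContDiff ℝ 1 φ → HasCompactSupport φ → tsupport φ ⊆ Ω →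
    ∀ v : En n, ∫ x in Ω, (fderiv ℝ φ x v) • f x = - ∫ x in Ω, φ x • g x v

/-- The precise representative `f*` (componentwise limsup of ball averages). -/
def precise (f : En n → En n) (x : En n) : En n :=
  (EuclideanSpace.equiv (Fin n) ℝ).symm
    (fun i => Filter.limsup (fun r => ⨍ y in ball x r, f y i) (𝓝[>] 0))

/-- Centered Hardy–Littlewood maximal function of `u : ℝⁿ → ℝ`. -/
def maxFn (u : En n → ℝ) (x : En n) : ℝ≥0∞ :=
  ⨆ (r : ℝ) (_ : 0 < r), (volume (ball x r))⁻¹ * ∫⁻ y in ball x r, ‖u y‖₊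

/-- Centered Hardy–Littlewood maximal function of `ρ : ℝⁿ → ℝ≥0∞`. -/
def maxFn' (ρ : En n → ℝ≥0∞) (x : En n) : ℝ≥0∞ :=
  ⨆ (r : ℝ) (_ : 0 < r), (volume (ball x r))⁻¹ * ∫⁻ y in ball x r, ρ y

/-- A `C¹` Urysohn function with compact support. -/
lemma exists_contDiff_bump {K O : Set (En n)} (hK : IsCompact K) (hO : IsOpen O) (hKO : K ⊆ O) :
    ∃ ψ : En n → ℝ, ContDiff ℝ 1 ψ ∧ HasCompactSupport ψ ∧ tsupport ψ ⊆ O ∧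
      (∀ x, 0 ≤ ψ x) ∧ (∀ x, ψ x ≤ 1) ∧ ∀ x ∈ K, ψ x = 1 := by
  obtain ⟨L, hL, hKL, hLO⟩ := exists_compact_between hK hO hKO
  obtain ⟨f, hf, hr, hs, h1⟩ := exists_contMDiff_support_eq_eq_one_iff (n := 1)
    (modelWithCornersSelf ℝ (En n)) isOpen_interior hK.isClosed hKL
  have hsub : tsupport f ⊆ L := by
    rw [tsupport, hs]; exact closure_minimal interior_subset hL.isClosed
  exact ⟨f, hf.contDiff, hL.of_isClosed_subset (isClosed_tsupport f) hsub, hsub.trans hLO,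
    fun x => (hr ⟨x, rfl⟩).1, fun x => (hr ⟨x, rfl⟩).2, fun x hx => (h1 x).1 hx⟩

lemma IsWeakGrad.abs_integral_mul_fderiv_le {u : En n → ℝ} {g : En n → (En n →L[ℝ] ℝ)}
    (h : IsWeakGrad u g) (hg : Integrable (fun x => ‖g x‖)) {φ : En n → ℝ} (hφ : ContDiff ℝ 1 φ)
    (hc : HasCompactSupport φ) {C : ℝ} (hC : ∀ x, |φ x| ≤ C) {e : En n} (he : ‖e‖ = 1) :
    |∫ x, u x * fderiv ℝ φ x e| ≤ C * ∫ x, ‖g x‖ := by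
  rw [h φ hφ hc e, abs_neg, ← integral_const_mul, ← Real.norm_eq_abs]
  refine norm_integral_le_of_norm_le (hg.const_mul C) (Eventually.of_forall fun x => ?_)
  rw [norm_mul]
  have : ‖g x e‖ ≤ ‖g x‖ := by simpa [he] using (g x).le_opNorm e
  exact mul_le_mul (hC x) this (norm_nonneg _) ((abs_nonneg _).trans (hC x))

/-- A compactly supported `C¹` primitive, in direction `e`, of a translation difference. -/
lemma exists_contDiff_fderiv_eq_sub_translate {ψ : En n → ℝ} (hψ : ContDiff ℝ 1 ψ)
    (hc : HasCompactSupport ψ) (h0 : ∀ x, 0 ≤ ψ x) (h1 : ∀ x, ψ x ≤ 1) {x₀ : En n} {r : ℝ}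
    (hr : 0 < r) (hs : tsupport ψ ⊆ ball x₀ r) {e : En n} (he : ‖e‖ = 1) {L : ℝ} (hL : 0 ≤ L) :
    ∃ φ : En n → ℝ, ContDiff ℝ 1 φ ∧ HasCompactSupport φ ∧ (∀ x, |φ x| ≤ 4 * r) ∧
      ∀ x, fderiv ℝ φ x e = ψ x - ψ (x - L • e) := by
  set φ : En n → ℝ := fun x => ∫ σ in Icc 0 L, ψ (x - σ • e) with hφ
  have hφx : ∀ x, φ x = ∫ σ in Icc 0 L, ψ (x - σ • e) := fun x => rfl
  have hDc : Continuous (fderiv ℝ ψ) := hψ.continuous_fderiv one_ne_zero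
  obtain ⟨C, hC⟩ := (hc.fderiv ℝ).exists_bound_of_continuous hDc
  have hm : ∀ x, Continuous fun σ : ℝ => ψ (x - σ • e) := fun x => hψ.continuous.comp (by fun_prop)
  have hmD : ∀ x, Continuous fun σ : ℝ => fderiv ℝ ψ (x - σ • e) := fun x => hDc.comp (by fun_prop)
  have hder : ∀ x, HasFDerivAt φ (∫ σ in Icc 0 L, fderiv ℝ ψ (x - σ • e)) x := fun x => by
    refine hasFDerivAt_integral_of_dominated_of_fderiv_le (bound := fun _ => C)
      (F' := fun y σ => fderiv ℝ ψ (y - σ • e)) (ball_mem_nhds x one_pos)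
      (Eventually.of_forall fun y => (hm y).aestronglyMeasurable) (hm x).integrableOn_Icc
      (hmD x).aestronglyMeasurable (Eventually.of_forall fun σ y _ => hC _) (integrable_const _)
      (Eventually.of_forall fun σ y _ => ?_)
    simpa using! (hψ.differentiable one_ne_zero).differentiableAt.hasFDerivAt.comp y
      ((hasFDerivAt_id y).sub (hasFDerivAt_const (σ • e) y))
  have hcd : ContDiff ℝ 1 φ := by
    rw [contDiff_one_iff_fderiv]
    refine ⟨fun x => (hder x).differentiableAt, ?_⟩
    rw [show fderiv ℝ φ = _ from funext fun x => (hder x).fderiv]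
    exact continuous_of_dominated (bound := fun _ => C) (fun x => (hmD x).aestronglyMeasurable)
      (fun x => Eventually.of_forall fun σ => hC _) (integrable_const _)
      (Eventually.of_forall fun σ => hDc.comp (by fun_prop))
  refine ⟨φ, hcd, ?_, ?_, ?_⟩
  · refine HasCompactSupport.of_support_subset_isCompact
      (K := (fun p : En n × ℝ => p.1 + p.2 • e) '' (tsupport ψ ×ˢ Icc 0 L))
      ((IsCompact.prod hc isCompact_Icc).image (by fun_prop)) fun x hx => ?_
    rw [Function.mem_support, hφx] at hx
    by_contra hx'
    refine hx (setIntegral_eq_zero_of_forall_eq_zero fun σ hσ => ?_)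
    by_contra h
    exact hx' ⟨(x - σ • e, σ), ⟨subset_tsupport _ h, hσ⟩, by simp⟩
  · intro x
    rw [hφx]
    rcases (Icc 0 L ∩ {σ | ψ (x - σ • e) ≠ 0}).eq_empty_or_nonempty with hemp | ⟨τ, hτL, hτ⟩
    · rw [setIntegral_eq_zero_of_forall_eq_zero]
      · simp [hr.le]
      · intro σ hσ
        by_contra h
        exact (hemp ▸ (show σ ∈ Icc 0 L ∩ {σ | ψ (x - σ • e) ≠ 0} from ⟨hσ, h⟩) : σ ∈ (∅ : Set ℝ))
    have hsub : ∀ σ ∉ closedBall τ (2 * r), ψ (x - σ • e) = 0 := by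
      intro σ hσ
      by_contra h
      apply hσ
      have a := hs (subset_tsupport _ h)
      have b := hs (subset_tsupport _ hτ)
      have : dist (x - σ • e) (x - τ • e) = dist σ τ := by
        rw [dist_sub_left, dist_eq_norm, ← sub_smul, norm_smul, he, mul_one, Real.dist_eq,
          Real.norm_eq_abs]
      rw [mem_ball] at a b
      rw [mem_closedBall, ← this]
      linarith [dist_triangle_right (x - σ • e) (x - τ • e) x₀]
    rw [abs_of_nonneg (integral_nonneg fun σ => h0 _)]
    calc ∫ σ in Icc 0 L, ψ (x - σ • e)
        ≤ ∫ σ in Icc 0 L, (closedBall τ (2 * r)).indicator (fun _ => (1 : ℝ)) σ := by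
          refine integral_mono (hm x).integrableOn_Icc
            ((integrable_const _).indicator measurableSet_closedBall) fun σ => ?_
          by_cases hσ : σ ∈ closedBall τ (2 * r)
          · simpa [hσ] using h1 _
          · simp [hσ, hsub σ hσ]
      _ ≤ ∫ σ, (closedBall τ (2 * r)).indicator (fun _ => (1 : ℝ)) σ := by
          refine integral_mono_measure Measure.restrict_le_self
            (Eventually.of_forall fun σ => indicator_nonneg (fun _ _ => zero_le_one) σ) ?_
          exact (integrable_indicator_iff measurableSet_closedBall).2
            (integrableOn_const (measure_closedBall_lt_top.ne))
      _ = 4 * r := by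
          rw [integral_indicator measurableSet_closedBall]
          simp [Measure.real, Real.volume_closedBall, hr.le]
          ring
  · intro x
    rw [(hder x).fderiv, ContinuousLinearMap.integral_apply (hmD x).integrableOn_Icc,
      integral_Icc_eq_integral_Ioc, ← intervalIntegral.integral_of_le hL]
    have hd : ∀ σ ∈ uIcc 0 L, HasDerivAt (fun σ : ℝ => - ψ (x - σ • e))
        (fderiv ℝ ψ (x - σ • e) e) σ := fun σ _ => by
      have h1 : HasDerivAt (fun σ : ℝ => x - σ • e) (-e) σ := by
        simpa using ((hasDerivAt_id σ).smul_const e).const_sub x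
      have := ((hψ.differentiable one_ne_zero (x - σ • e)).hasFDerivAt.comp_hasDerivAt σ h1).neg
      simpa [Function.comp_def, Pi.neg_def] using this
    rw [intervalIntegral.integral_eq_sub_of_hasDerivAt hd]
    · simp; ring
    · apply Continuous.intervalIntegrable
      exact (hmD x).clm_apply continuous_const

/-- Sobolev-type bound: if `u ≥ 1` on the open set `V`, the part of `V` in a ball is small. -/
lemma IsWeakGrad.volume_inter_ball_le {u : En n → ℝ} {g : En n → (En n →L[ℝ] ℝ)}
    (h : IsWeakGrad u g) (hu : Integrable u) (hg : Integrable (fun x => ‖g x‖)) {V : Set (En n)}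
    (hV : IsOpen V) (h1 : ∀ x ∈ V, 1 ≤ u x) (x₀ : En n) {r : ℝ} (hr : 0 < r) {e : En n}
    (he : ‖e‖ = 1) :
    volume (V ∩ ball x₀ r) ≤ ENNReal.ofReal (4 * r * ∫ x, ‖g x‖) := by
  rw [(hV.inter isOpen_ball).measure_eq_iSup_isCompact]
  refine iSup₂_le fun K hKV => iSup_le fun hK => ?_
  obtain ⟨ψ, hψ, hc, hs, p0, p1, pK⟩ := exists_contDiff_bump hK (hV.inter isOpen_ball) hKV
  have hψi : Integrable ψ := hψ.continuous.integrable_of_hasCompactSupport hc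
  have huψ : ∀ y : En n, Integrable fun x => u x * ψ (x - y) := fun y =>
    hu.mul_bdd (c := 1) (hψ.continuous.comp (by fun_prop)).aestronglyMeasurable
      (Eventually.of_forall fun x => by rw [Real.norm_eq_abs, abs_of_nonneg (p0 _)]; exact p1 _)
  have hk : ∀ k : ℕ, ∫ x, u x * ψ x ≤ 4 * r * (∫ x, ‖g x‖) + ∫ x, u x * ψ (x - (k : ℝ) • e) := by
    intro k
    obtain ⟨φ, hφ, hφc, hb, hd⟩ := exists_contDiff_fderiv_eq_sub_translate hψ hc p0 p1 hr
      (hs.trans inter_subset_right) he (Nat.cast_nonneg k)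
    have := (le_abs_self _).trans (h.abs_integral_mul_fderiv_le hg hφ hφc hb he)
    simp only [hd, mul_sub] at this
    rw [integral_sub (by simpa using huψ 0) (huψ _)] at this
    linarith
  have hlim : Tendsto (fun k : ℕ => ∫ x, u x * ψ (x - (k : ℝ) • e)) atTop
      (𝓝 (∫ _ : En n, (0 : ℝ))) := by
    refine tendsto_integral_of_dominated_convergence (fun x => ‖u x‖)
      (fun k => (huψ _).aestronglyMeasurable) hu.norm (fun k => Eventually.of_forall fun x => ?_)
      (Eventually.of_forall fun x => ?_)
    · rw [norm_mul, Real.norm_eq_abs (ψ _), abs_of_nonneg (p0 _)]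
      exact mul_le_of_le_one_right (norm_nonneg _) (p1 _)
    · apply tendsto_const_nhds.congr'
      filter_upwards [eventually_gt_atTop ⌈r + dist x x₀⌉₊] with k hk
      have hk' : r + dist x x₀ < k := Nat.lt_of_ceil_lt hk
      rw [eq_comm, mul_eq_zero]
      right
      by_contra hne
      have := (hs (subset_tsupport _ hne)).2
      rw [mem_ball] at this
      have h2 : dist x (x - (k : ℝ) • e) = k := by
        simp [norm_smul, he]
      linarith [dist_triangle_right x (x - (k : ℝ) • e) x₀,
        dist_triangle x x₀ (x - (k : ℝ) • e), dist_comm x₀ (x - (k : ℝ) • e)]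
  have hle : ∫ x, u x * ψ x ≤ 4 * r * (∫ x, ‖g x‖) := by
    have := le_of_tendsto_of_tendsto' tendsto_const_nhds (tendsto_const_nhds.add hlim) hk
    simpa using this
  calc volume K = ∫⁻ x in K, 1 := by simp
    _ ≤ ∫⁻ x in K, ENNReal.ofReal (ψ x) := by
        refine setLIntegral_mono' hK.measurableSet fun x hx => by rw [pK x hx]; simp
    _ ≤ ∫⁻ x, ENNReal.ofReal (ψ x) := setLIntegral_le_lintegral _ _
    _ = ENNReal.ofReal (∫ x, ψ x) := (ofReal_integral_eq_lintegral_ofReal hψi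
        (Eventually.of_forall p0)).symm
    _ ≤ ENNReal.ofReal (∫ x, u x * ψ x) := by
        refine ENNReal.ofReal_le_ofReal (integral_mono hψi (by simpa using huψ 0) fun x => ?_)
        by_cases hx : ψ x = 0
        · simp [hx]
        · exact le_mul_of_one_le_left (p0 x) (h1 x (hs (subset_tsupport _ hx)).1)
    _ ≤ _ := ENNReal.ofReal_le_ofReal hle

/-- A finely open set has Lebesgue density one at each of its points. -/
lemma FinelyOpen1.eventually_volume_ball_diff_le {U : Set (En n)} (hU : FinelyOpen1 U) {x : En n}
    (hx : x ∈ U) (hn : n ≠ 0) {θ : ℝ≥0∞} (hθ : 0 < θ) :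
    ∀ᶠ r : ℝ in 𝓝[>] 0, volume (ball x r \ U) ≤ θ * ENNReal.ofReal (r ^ n) := by
  have h4 : 0 < θ / 4 := ENNReal.div_pos hθ.ne' (by simp)
  filter_upwards [(hU x hx).eventually_lt_const h4, self_mem_nhdsWithin] with r hr hr0
  have hr0 : 0 < r := hr0
  have hpos : ENNReal.ofReal (r ^ (n - 1)) ≠ 0 := by simp; positivity
  rw [ENNReal.div_lt_iff (.inl hpos) (.inl ENNReal.ofReal_ne_top), cap1, sInf_lt_iff] at hr
  obtain ⟨c, ⟨u, g, hu, hg, hug, ⟨V, hV, hAV, h1⟩, hc⟩, hcr⟩ := hr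
  have : ‖(EuclideanSpace.single (⟨0, Nat.pos_of_ne_zero hn⟩ : Fin n) (1 : ℝ))‖ = 1 := by simp
  have key := hug.volume_inter_ball_le hu hg hV h1 x hr0 this
  calc volume (ball x r \ U) ≤ volume (V ∩ ball x r) :=
        measure_mono fun y hy => ⟨hAV ⟨hy.2, hy.1⟩, hy.1⟩
    _ ≤ ENNReal.ofReal (4 * r * ∫ x, ‖g x‖) := key
    _ ≤ ENNReal.ofReal (4 * r * ((∫ x, |u x|) + ∫ x, ‖g x‖)) := by
        apply ENNReal.ofReal_le_ofReal
        have : 0 ≤ ∫ x, |u x| := integral_nonneg fun _ => abs_nonneg _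
        gcongr
        linarith
    _ = ENNReal.ofReal (4 * r) * c := by rw [hc, ENNReal.ofReal_mul (by positivity)]
    _ ≤ ENNReal.ofReal (4 * r) * (θ / 4 * ENNReal.ofReal (r ^ (n - 1))) := by gcongr
    _ = θ * ENNReal.ofReal (r ^ n) := by
        rw [ENNReal.ofReal_mul (by norm_num), ← mul_pow_sub_one hn r,
          ENNReal.ofReal_mul (p := r) hr0.le]
        have : ENNReal.ofReal 4 = 4 := by simp
        rw [this]
        calc _ = (4 * (θ / 4)) * (ENNReal.ofReal r * ENNReal.ofReal (r ^ (n - 1))) := by ring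
          _ = _ := by rw [ENNReal.mul_div_cancel (by simp) (by simp)]

/-- Oscillation bound on a finely open set, in a form that is linear in two measures. -/
lemma eventually_mul_ediam_le_of_Kfine_lt (hn : 2 ≤ n) {f : En n → En n} {x : En n} {c : ℝ≥0∞}
    (h : Kfine f x < c) {l : ℝ≥0∞} (hl : l ≠ 0) (hl' : l ≠ ∞) :
    ∃ U, FinelyOpen1 U ∧ x ∈ U ∧ ∀ᶠ r : ℝ in 𝓝[>] 0,
      ENNReal.ofReal r ^ (n - 1) * ediam (f '' (ball x r ∩ U)) ≤
        l * c * ENNReal.ofReal r ^ n + l⁻¹ ^ (n - 1) * volume (f '' ball x r) := by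
  simp only [Kfine, iInf_lt_iff] at h
  obtain ⟨U, hU, hxU, hlim⟩ := h
  refine ⟨U, hU, hxU, ?_⟩
  filter_upwards [eventually_lt_of_limsup_lt hlim, self_mem_nhdsWithin] with r hr hr0
  set R := ENNReal.ofReal r
  set v := volume (f '' ball x r)
  set d := ediam (f '' (ball x r ∩ U))
  have hd : d ^ n ≤ c ^ (n - 1) * v := by
    rw [KfU] at hr
    split_ifs at hr with h0
    · exact absurd hr not_top_lt
    have hn1 : (0 : ℝ) < (n : ℝ) - 1 := by
      have : (2 : ℝ) ≤ n := by exact_mod_cast hn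
      linarith
    have hc0 : c ^ (n - 1) ≠ 0 := pow_ne_zero _ (ne_bot_of_gt hr)
    rw [ENNReal.rpow_inv_lt_iff hn1, show ((n : ℝ) - 1) = ((n - 1 : ℕ) : ℝ) by
      rw [Nat.cast_sub (by omega)]; simp, ENNReal.rpow_natCast] at hr
    exact (ENNReal.div_le_iff_le_mul (.inl h0) (.inr hc0)).1 hr.le
  have hn0 : n ≠ 0 := by omega
  rw [← ENNReal.pow_le_pow_left_iff hn0]
  calc (R ^ (n - 1) * d) ^ n = (R ^ n) ^ (n - 1) * d ^ n := by rw [mul_pow]; ring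
    _ ≤ (R ^ n) ^ (n - 1) * (c ^ (n - 1) * v) := by gcongr
    _ = (l * l⁻¹) ^ (n - 1) * ((R ^ n) ^ (n - 1) * (c ^ (n - 1) * v)) := by
        rw [ENNReal.mul_inv_cancel hl hl']; simp
    _ = (l * c * R ^ n) ^ (n - 1) * (l⁻¹ ^ (n - 1) * v) := by simp only [mul_pow]; ring
    _ ≤ (l * c * R ^ n + l⁻¹ ^ (n - 1) * v) ^ (n - 1) * (l * c * R ^ n + l⁻¹ ^ (n - 1) * v) := by
        gcongr
        · exact le_self_add
        · exact le_add_self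
    _ = _ := by rw [pow_sub_one_mul hn0]

/-- The points from which some point of `A` is reached by travelling at most `s` along `e`. -/
def tube (e : En n) (s : ℝ) (A : Set (En n)) : Set (En n) :=
  {x | ∃ σ ∈ Icc (0 : ℝ) s, x + σ • e ∈ A}

/-- The pairs `(x, t)` such that the value `t` is taken by `u` at a point of `A` on the segment
from `x` to `x + s • e`. -/
def sweep (u : En n → ℝ) (e : En n) (s : ℝ) (A : Set (En n)) : Set (En n × ℝ) :=
  {q | ∃ σ ∈ Icc (0 : ℝ) s, q.1 + σ • e ∈ A ∧ u (q.1 + σ • e) = q.2}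

lemma tube_mono (e : En n) (s : ℝ) {A B : Set (En n)} (h : A ⊆ B) : tube e s A ⊆ tube e s B :=
  fun _ ⟨σ, hσ, hx⟩ => ⟨σ, hσ, h hx⟩

lemma sweep_mono (u : En n → ℝ) (e : En n) (s : ℝ) {A B : Set (En n)} (h : A ⊆ B) :
    sweep u e s A ⊆ sweep u e s B :=
  fun _ ⟨σ, hσ, hx, hq⟩ => ⟨σ, hσ, h hx, hq⟩

lemma sweep_iUnion {ι : Sort*} (u : En n → ℝ) (e : En n) (s : ℝ) (A : ι → Set (En n)) :
    sweep u e s (⋃ i, A i) = ⋃ i, sweep u e s (A i) := by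
  ext q
  simp only [sweep, mem_iUnion, mem_ofPred_eq]
  constructor
  · rintro ⟨σ, hσ, ⟨i, hi⟩, hq⟩
    exact ⟨i, σ, hσ, hi, hq⟩
  · rintro ⟨i, σ, hσ, hi, hq⟩
    exact ⟨σ, hσ, ⟨i, hi⟩, hq⟩

lemma volume_sweep_le (u : En n → ℝ) (e : En n) (s : ℝ) (A : Set (En n)) :
    volume (sweep u e s A) ≤ volume (tube e s A) * volume (u '' A) := by
  rw [Measure.volume_eq_prod, ← Measure.prod_prod]
  exact measure_mono fun q ⟨σ, hσ, hx, hq⟩ => ⟨⟨σ, hσ, hx⟩, _, hx, hq⟩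

/-- The constant in the volume bound for tubes around balls. -/
def tubeConst (n : ℕ) : ℝ≥0∞ := 2 ^ (n + 1) * volume (ball (0 : En n) 1)

lemma tubeConst_ne_top : tubeConst n ≠ ∞ :=
  ENNReal.mul_ne_top (by simp) measure_ball_lt_top.ne

lemma volume_tube_ball_le (hn : n ≠ 0) {e : En n} (he : ‖e‖ = 1) {s r : ℝ} (hr : 0 < r)
    (hrs : r ≤ s) (x : En n) :
    volume (tube e s (ball x r)) ≤
      tubeConst n * (ENNReal.ofReal s * ENNReal.ofReal r ^ (n - 1)) := by
  have hs : 0 < s := hr.trans_le hrs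
  set N := ⌊s / r⌋₊
  have hsub : tube e s (ball x r) ⊆
      ⋃ i ∈ Finset.range (N + 1), ball (x - ((i : ℝ) * r) • e) (2 * r) := by
    rintro y ⟨σ, ⟨hσ0, hσs⟩, hy⟩
    rw [mem_ball, dist_eq_norm] at hy
    have hσr : 0 ≤ σ / r := by positivity
    refine mem_biUnion (x := ⌊σ / r⌋₊) (Finset.mem_coe.2 (Finset.mem_range.2 (Nat.lt_succ_of_le
      (Nat.floor_mono (by gcongr))))) ?_
    rw [mem_ball, dist_eq_norm]
    have h1 := Nat.floor_le hσr
    have h2 := Nat.lt_floor_add_one (σ / r)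
    rw [le_div_iff₀ hr] at h1
    rw [div_lt_iff₀ hr] at h2
    have : y - (x - ((⌊σ / r⌋₊ : ℝ) * r) • e) =
        (y + σ • e - x) - (σ - (⌊σ / r⌋₊ : ℝ) * r) • e := by module
    rw [this]
    calc _ ≤ ‖y + σ • e - x‖ + ‖(σ - (⌊σ / r⌋₊ : ℝ) * r) • e‖ := norm_sub_le _ _
      _ < r + r := by
        apply add_lt_add hy
        rw [norm_smul, he, mul_one, Real.norm_eq_abs, abs_lt]
        constructor <;> linarith
      _ = _ := by ring
  have hN : ((N + 1 : ℕ) : ℝ≥0∞) * ENNReal.ofReal r ≤ 2 * ENNReal.ofReal s := by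
    rw [← ENNReal.ofReal_natCast, ← ENNReal.ofReal_mul (by positivity),
      show (2 : ℝ≥0∞) = ENNReal.ofReal 2 by simp, ← ENNReal.ofReal_mul (by norm_num)]
    apply ENNReal.ofReal_le_ofReal
    have := Nat.floor_le (show 0 ≤ s / r by positivity)
    rw [le_div_iff₀ hr] at this
    push_cast
    linarith
  calc volume (tube e s (ball x r))
      ≤ ∑ i ∈ Finset.range (N + 1), volume (ball (x - ((i : ℝ) * r) • e) (2 * r)) :=
        (measure_mono hsub).trans (measure_biUnion_finset_le _ _)
    _ = ((N + 1 : ℕ) : ℝ≥0∞) * (ENNReal.ofReal (2 * r) ^ n * volume (ball (0 : En n) 1)) := by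
        have : ∀ y : En n, volume (ball y (2 * r)) =
            ENNReal.ofReal (2 * r) ^ n * volume (ball (0 : En n) 1) := fun y => by
          rw [Measure.addHaar_ball_of_pos volume y (by positivity),
            ENNReal.ofReal_pow (by positivity)]
          simp
        simp [this]
    _ = (((N + 1 : ℕ) : ℝ≥0∞) * ENNReal.ofReal r) *
          (2 ^ n * ENNReal.ofReal r ^ (n - 1) * volume (ball (0 : En n) 1)) := by
        rw [ENNReal.ofReal_mul (by norm_num), mul_pow, ← mul_pow_sub_one hn (ENNReal.ofReal r)]
        simp only [ENNReal.ofReal_ofNat]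
        ring
    _ ≤ (2 * ENNReal.ofReal s) *
          (2 ^ n * ENNReal.ofReal r ^ (n - 1) * volume (ball (0 : En n) 1)) := by gcongr
    _ = _ := by rw [tubeConst, pow_succ]; ring

/-- Density defect that forces two dense sets with nearby centres to intersect. -/
def densityDefect (n : ℕ) : ℝ≥0∞ := volume (ball (0 : En n) 1) / (2 ^ n * 4)

lemma densityDefect_pos : 0 < densityDefect n :=
  ENNReal.div_pos (measure_ball_pos _ _ one_pos).ne' (ENNReal.mul_ne_top (by simp) (by simp))

lemma ball_inter_inter_nonempty {x y : En n} {r : ℝ} (hr : 0 < r) (hxy : dist x y ≤ r / 2)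
    {U V : Set (En n)} (hU : volume (ball x r \ U) ≤ densityDefect n * ENNReal.ofReal (r ^ n))
    (hV : volume (ball y r \ V) ≤ densityDefect n * ENNReal.ofReal (r ^ n)) :
    ((ball x r ∩ U) ∩ (ball y r ∩ V)).Nonempty := by
  by_contra hemp
  rw [not_nonempty_iff_eq_empty] at hemp
  have hsub : ball x (r / 2) ⊆ (ball x r \ U) ∪ (ball y r \ V) := by
    intro z hz
    rw [mem_ball] at hz
    have h1 : z ∈ ball x r := by rw [mem_ball]; linarith
    have h2 : z ∈ ball y r := by rw [mem_ball]; linarith [dist_triangle z x y]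
    by_contra hz'
    simp only [mem_union, Set.mem_sdiff, h1, h2, true_and, not_or, not_not] at hz'
    have : z ∈ (∅ : Set (En n)) := hemp ▸ ⟨⟨h1, hz'.1⟩, h2, hz'.2⟩
    exact this
  have h1 := (measure_mono hsub).trans ((measure_union_le _ _).trans (add_le_add hU hV))
  rw [Measure.addHaar_ball_of_pos volume x (by positivity)] at h1
  set ω := volume (ball (0 : En n) 1)
  have hω0 : ω ≠ 0 := (measure_ball_pos _ _ one_pos).ne'
  have hω : ω ≠ ∞ := measure_ball_lt_top.ne
  have h2n : (2 : ℝ≥0∞) ^ n ≠ 0 := by positivity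
  have h2n' : (2 : ℝ≥0∞) ^ n ≠ ∞ := by simp
  have hD : densityDefect n * (2 ^ n * 4) = ω := ENNReal.div_mul_cancel (mul_ne_zero h2n (by simp))
    (ENNReal.mul_ne_top h2n' (by simp))
  have h3 : ENNReal.ofReal ((r / 2) ^ n) * 2 ^ n = ENNReal.ofReal (r ^ n) := by
    rw [show (2 : ℝ≥0∞) ^ n = ENNReal.ofReal (2 ^ n) by simp [ENNReal.ofReal_pow],
      ← ENNReal.ofReal_mul (by positivity), ← mul_pow, div_mul_cancel₀ _ (by norm_num)]
  set R := ENNReal.ofReal (r ^ n)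
  have hR0 : R ≠ 0 := by simp [R]; positivity
  have hR : R ≠ ∞ := ENNReal.ofReal_ne_top
  simp only [finrank_euclideanSpace, Fintype.card_fin] at h1
  have h4 : 4 * (R * ω) ≤ 2 * (R * ω) := by
    calc 4 * (R * ω) = (ENNReal.ofReal ((r / 2) ^ n) * ω) * (2 ^ n * 4) := by rw [← h3]; ring
      _ ≤ (densityDefect n * R + densityDefect n * R) * (2 ^ n * 4) := by gcongr
      _ = 2 * R * (densityDefect n * (2 ^ n * 4)) := by ring
      _ = _ := by rw [hD]; ring
  have h5 : (4 : ℝ≥0∞) ≤ 2 := by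
    rwa [ENNReal.mul_le_mul_iff_left (mul_ne_zero hR0 hω0) (ENNReal.mul_ne_top hR hω)] at h4
  exact absurd h5 (by norm_num)

lemma dist_le_of_coord {x y : En n} {δ : ℝ} (hδ : 0 ≤ δ) (h : ∀ i, |x i - y i| ≤ δ) :
    dist x y ≤ n * δ := by
  rw [EuclideanSpace.dist_eq]
  apply Real.sqrt_le_iff.2 ⟨by positivity, ?_⟩
  calc ∑ i, dist (x i) (y i) ^ 2 ≤ ∑ _i : Fin n, δ ^ 2 := by
        gcongr with i; rw [Real.dist_eq]; exact h i
    _ = n * δ ^ 2 := by simp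
    _ ≤ n * (n * δ ^ 2) := by
        rcases Nat.eq_zero_or_pos n with rfl | hn
        · simp
        · have : (1 : ℝ) ≤ n := by exact_mod_cast hn
          nlinarith [sq_nonneg δ, mul_nonneg (Nat.cast_nonneg n : (0 : ℝ) ≤ n) (sq_nonneg δ)]
    _ = _ := by ring

/-- The index of the cube of side `δ` containing a point. -/
def cubeIndex (δ : ℝ) (y : En n) : Fin n → ℤ := fun i => ⌊y i / δ⌋

lemma measurable_cubeIndex (δ : ℝ) : Measurable (cubeIndex δ : En n → Fin n → ℤ) :=
  measurable_pi_lambda _ fun i => Int.measurable_floor.comp (by fun_prop)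

lemma abs_cubeIndex_sub_le {δ : ℝ} (hδ : 0 < δ) {k : ℕ} {x y : En n} (h : dist x y < k * δ)
    (i : Fin n) : |cubeIndex δ x i - cubeIndex δ y i| ≤ k := by
  have h1 : |x i - y i| < k * δ := by
    rw [dist_eq_norm] at h
    exact (by simpa using PiLp.norm_apply_le (x - y) i : |x i - y i| ≤ ‖x - y‖).trans_lt h
  have h2 : |x i / δ - y i / δ| < k := by
    rw [show x i / δ - y i / δ = (x i - y i) / δ by ring, abs_div, abs_of_pos hδ, div_lt_iff₀ hδ]
    exact h1
  simp only [cubeIndex]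
  rw [abs_lt] at h2
  rw [abs_le]
  have a1 := Int.floor_le (x i / δ)
  have a2 := Int.lt_floor_add_one (x i / δ)
  have a3 := Int.floor_le (y i / δ)
  have a4 := Int.lt_floor_add_one (y i / δ)
  constructor
  · rw [← Int.lt_add_one_iff]
    have : (-(k : ℝ)) < ⌊x i / δ⌋ - ⌊y i / δ⌋ + 1 := by linarith
    exact_mod_cast this
  · rw [← Int.lt_add_one_iff]
    have : ((⌊x i / δ⌋ - ⌊y i / δ⌋ : ℝ)) < k + 1 := by linarith
    exact_mod_cast this

lemma tsum_measure_cube_neighbours_le (δ : ℝ) (k : ℕ) (m : Measure (En n)) :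
    ∑' z : Fin n → ℤ, m {y | ∀ i, |cubeIndex δ y i - z i| ≤ k} ≤ (2 * k + 1 : ℕ) ^ n * m univ := by
  have hmeas : ∀ z : Fin n → ℤ, MeasurableSet {y : En n | ∀ i, |cubeIndex δ y i - z i| ≤ k} :=
    fun z => (measurable_cubeIndex δ)
      (Set.to_countable {w : Fin n → ℤ | ∀ i, |w i - z i| ≤ k}).measurableSet
  calc ∑' z : Fin n → ℤ, m {y | ∀ i, |cubeIndex δ y i - z i| ≤ k}
      = ∑' z : Fin n → ℤ, ∫⁻ y, {y | ∀ i, |cubeIndex δ y i - z i| ≤ k}.indicator 1 y ∂m := by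
        simp_rw [lintegral_indicator_one (hmeas _)]
    _ = ∫⁻ y, ∑' z : Fin n → ℤ, {y | ∀ i, |cubeIndex δ y i - z i| ≤ k}.indicator 1 y ∂m :=
        (lintegral_tsum fun z => (measurable_one.indicator (hmeas z)).aemeasurable).symm
    _ ≤ ∫⁻ _, ((2 * k + 1 : ℕ) ^ n : ℝ≥0∞) ∂m := by
        refine lintegral_mono fun y => ?_
        set S := Finset.Icc (fun i => cubeIndex δ y i - k) (fun i => cubeIndex δ y i + k)
        rw [tsum_eq_sum (s := S)]
        · calc ∑ z ∈ S, {y : En n | ∀ i, |cubeIndex δ y i - z i| ≤ k}.indicator (1 : En n → ℝ≥0∞) y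
                  ≤ ∑ z ∈ S, (1 : ℝ≥0∞) :=
                Finset.sum_le_sum fun z _ => indicator_le_self' (fun _ _ => zero_le) _
            _ = _ := by
              have : S.card = (2 * k + 1) ^ n := by
                simp only [S, Pi.card_Icc, Int.card_Icc]
                rw [Finset.prod_congr rfl (g := fun _ => 2 * k + 1) (fun i _ => by omega)]
                simp
              simp [this]
        · intro z hz
          rw [indicator_of_notMem]
          contrapose! hz
          rw [Finset.mem_Icc]
          constructor <;> intro i <;> have := abs_le.1 (hz i) <;> simp only <;> omega
    _ = _ := by simp

/-- The constant in the covering estimate for sweeps. -/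
def sweepConst (n : ℕ) : ℝ≥0∞ := tubeConst n * 2 * (2 * (2 * n : ℕ) + 1 : ℕ) ^ n

lemma sweepConst_ne_top : sweepConst n ≠ ∞ :=
  ENNReal.mul_ne_top (ENNReal.mul_ne_top tubeConst_ne_top (by simp))
    (ENNReal.pow_ne_top (ENNReal.natCast_ne_top _))

lemma volume_sweep_le_of_forall_mem_Ioo (hn : n ≠ 0) (m : Measure (En n)) {u : En n → ℝ}
    {e : En n} (he : ‖e‖ = 1) {s : ℝ} (hs : 0 < s) {O P : Set (En n)} (hO : MeasurableSet O)
    {ρ : ℝ} (hρ : 0 < ρ) (hPO : ∀ x ∈ P, ball x ρ ⊆ O)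
    (hP : ∀ x ∈ P, ∃ U, x ∈ U ∧ ∀ r ∈ Ioo 0 ρ,
      volume (ball x r \ U) ≤ densityDefect n * ENNReal.ofReal (r ^ n) ∧
      ENNReal.ofReal r ^ (n - 1) * ediam (u '' (ball x r ∩ U)) ≤ m (ball x r)) :
    volume (sweep u e s P) ≤ sweepConst n * (ENNReal.ofReal s * m O) := by
  have hn0 : (0 : ℝ) < n := by exact_mod_cast Nat.pos_of_ne_zero hn
  set r := min s (ρ / 2) with hr
  have hr0 : 0 < r := lt_min hs (by positivity)
  have hrs : r ≤ s := min_le_left _ _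
  have hrρ : r < ρ := (min_le_right _ _).trans_lt (by linarith)
  set δ := r / (2 * n) with hδ
  have hδ0 : 0 < δ := by positivity
  have hδr : ((2 * n : ℕ) : ℝ) * δ = r := by push_cast; rw [hδ]; field_simp
  set N : (Fin n → ℤ) → Set (En n) :=
    fun z => {y | ∀ i, |cubeIndex δ y i - z i| ≤ (2 * n : ℕ)} with hN
  set Q : (Fin n → ℤ) → Set (En n) := fun z => {y ∈ P | cubeIndex δ y = z} with hQ
  have hPQ : P = ⋃ z, Q z := by ext y; simp [hQ]
  have hsubN : ∀ z, ∀ x ∈ Q z, ball x r ⊆ N z ∩ O := by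
    intro z x hx y hy
    refine ⟨fun i => ?_, hPO x hx.1 (ball_subset_ball hrρ.le hy)⟩
    rw [← hx.2]
    exact abs_cubeIndex_sub_le hδ0 (by rwa [hδr]) i
  have hdist : ∀ z, ∀ x ∈ Q z, ∀ y ∈ Q z, dist x y ≤ r / 2 := by
    intro z x hx y hy
    have : r / 2 = n * δ := by rw [hδ]; field_simp
    rw [this]
    refine dist_le_of_coord hδ0.le fun i => ?_
    have h : ⌊x i / δ⌋ = ⌊y i / δ⌋ := congrFun (hx.2.trans hy.2.symm) i
    have h' := Int.abs_sub_lt_one_of_floor_eq_floor h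
    rw [show x i / δ - y i / δ = (x i - y i) / δ by ring, abs_div, abs_of_pos hδ0,
      div_lt_one hδ0] at h'
    exact h'.le
  have hR0 : ENNReal.ofReal r ^ (n - 1) ≠ 0 := by simp [hr0]
  have hR : ENNReal.ofReal r ^ (n - 1) ≠ ∞ := by simp
  have hdiam : ∀ z, ENNReal.ofReal r ^ (n - 1) * ediam (u '' Q z) ≤ 2 * m (N z ∩ O) := by
    intro z
    rw [mul_comm, ← ENNReal.le_div_iff_mul_le (Or.inl hR0) (Or.inl hR)]
    refine ediam_le ?_
    rintro _ ⟨x, hx, rfl⟩ _ ⟨y, hy, rfl⟩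
    rw [ENNReal.le_div_iff_mul_le (Or.inl hR0) (Or.inl hR)]
    obtain ⟨U, hxU, hU⟩ := hP x hx.1
    obtain ⟨V, hyV, hV⟩ := hP y hy.1
    obtain ⟨w, hw1, hw2⟩ := ball_inter_inter_nonempty hr0 (hdist z x hx y hy)
      (hU r ⟨hr0, hrρ⟩).1 (hV r ⟨hr0, hrρ⟩).1
    have h1 : edist (u x) (u w) ≤ ediam (u '' (ball x r ∩ U)) :=
      edist_le_ediam_of_mem (mem_image_of_mem _ ⟨mem_ball_self hr0, hxU⟩) (mem_image_of_mem _ hw1)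
    have h2 : edist (u w) (u y) ≤ ediam (u '' (ball y r ∩ V)) :=
      edist_le_ediam_of_mem (mem_image_of_mem _ hw2) (mem_image_of_mem _ ⟨mem_ball_self hr0, hyV⟩)
    calc edist (u x) (u y) * ENNReal.ofReal r ^ (n - 1)
        ≤ (ediam (u '' (ball x r ∩ U)) + ediam (u '' (ball y r ∩ V))) *
            ENNReal.ofReal r ^ (n - 1) := by
          gcongr; exact (edist_triangle _ _ _).trans (add_le_add h1 h2)
      _ = ENNReal.ofReal r ^ (n - 1) * ediam (u '' (ball x r ∩ U)) +
            ENNReal.ofReal r ^ (n - 1) * ediam (u '' (ball y r ∩ V)) := by ring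
      _ ≤ m (N z ∩ O) + m (N z ∩ O) := add_le_add
          ((hU r ⟨hr0, hrρ⟩).2.trans (measure_mono (hsubN z x hx)))
          ((hV r ⟨hr0, hrρ⟩).2.trans (measure_mono (hsubN z y hy)))
      _ = _ := (two_mul _).symm
  have hpiece : ∀ z, volume (sweep u e s (Q z)) ≤
      tubeConst n * 2 * ENNReal.ofReal s * m.restrict O (N z) := by
    intro z
    rw [Measure.restrict_apply' hO]
    rcases (Q z).eq_empty_or_nonempty with h | ⟨x, hx⟩
    · rw [h]
      simp [sweep]
    · have hb : Q z ⊆ ball x r := fun y hy => by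
        rw [mem_ball]; linarith [hdist z y hy x hx]
      calc volume (sweep u e s (Q z))
          ≤ volume (tube e s (Q z)) * volume (u '' Q z) := volume_sweep_le _ _ _ _
        _ ≤ (tubeConst n * (ENNReal.ofReal s * ENNReal.ofReal r ^ (n - 1))) *
              ediam (u '' Q z) := by
            gcongr
            · exact (measure_mono (tube_mono e s hb)).trans (volume_tube_ball_le hn he hr0 hrs x)
            · exact Real.volume_le_diam _
        _ = tubeConst n * ENNReal.ofReal s *
              (ENNReal.ofReal r ^ (n - 1) * ediam (u '' Q z)) := by ring
        _ ≤ tubeConst n * ENNReal.ofReal s * (2 * m (N z ∩ O)) :=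
            mul_le_mul_right (hdiam z) _
        _ = _ := by ring
  calc volume (sweep u e s P) ≤ ∑' z, volume (sweep u e s (Q z)) := by
        rw [hPQ, sweep_iUnion]; exact measure_iUnion_le _
    _ ≤ ∑' z, tubeConst n * 2 * ENNReal.ofReal s * m.restrict O (N z) :=
        ENNReal.tsum_le_tsum hpiece
    _ = tubeConst n * 2 * ENNReal.ofReal s * ∑' z, m.restrict O (N z) := ENNReal.tsum_mul_left
    _ ≤ tubeConst n * 2 * ENNReal.ofReal s *
          ((2 * (2 * n : ℕ) + 1 : ℕ) ^ n * m.restrict O univ) := by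
        gcongr; exact tsum_measure_cube_neighbours_le δ (2 * n) _
    _ = _ := by rw [Measure.restrict_apply_univ, sweepConst]; ring

lemma volume_sweep_le_of_eventually (hn : n ≠ 0) (m : Measure (En n)) [m.OuterRegular]
    {u : En n → ℝ} {e : En n} (he : ‖e‖ = 1) {s : ℝ} (hs : 0 < s) {A : Set (En n)}
    (hA : ∀ x ∈ A, ∃ U, x ∈ U ∧
      (∀ᶠ r in 𝓝[>] (0 : ℝ),
        volume (ball x r \ U) ≤ densityDefect n * ENNReal.ofReal (r ^ n)) ∧
      ∀ᶠ r in 𝓝[>] (0 : ℝ),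
        ENNReal.ofReal r ^ (n - 1) * ediam (u '' (ball x r ∩ U)) ≤ m (ball x r)) :
    volume (sweep u e s A) ≤ sweepConst n * (ENNReal.ofReal s * m A) := by
  suffices h : ∀ O, A ⊆ O → IsOpen O →
      volume (sweep u e s A) ≤ sweepConst n * (ENNReal.ofReal s * m O) by
    have hs0 : ENNReal.ofReal s ≠ 0 := by simpa using hs
    rw [A.measure_eq_iInf_isOpen m]
    rcases eq_or_ne (sweepConst n) 0 with h0 | h0
    · simpa [h0] using h univ (subset_univ _) isOpen_univ
    · rw [← mul_assoc, mul_comm, ← ENNReal.div_le_iff_le_mul (Or.inl (mul_ne_zero h0 hs0))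
        (Or.inl (ENNReal.mul_ne_top sweepConst_ne_top ENNReal.ofReal_ne_top))]
      refine le_iInf₂ fun O hAO => le_iInf fun hO => ?_
      rw [ENNReal.div_le_iff_le_mul (Or.inl (mul_ne_zero h0 hs0))
        (Or.inl (ENNReal.mul_ne_top sweepConst_ne_top ENNReal.ofReal_ne_top)), mul_comm, mul_assoc]
      exact h O hAO hO
  intro O hAO hO
  set ρ : ℕ → ℝ := fun j => 1 / ((j : ℝ) + 1)
  have hρ : ∀ j, 0 < ρ j := fun j => Nat.one_div_pos_of_nat
  set P : ℕ → Set (En n) := fun j => {x ∈ A | ball x (ρ j) ⊆ O ∧ ∃ U, x ∈ U ∧ ∀ r ∈ Ioo 0 (ρ j),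
      volume (ball x r \ U) ≤ densityDefect n * ENNReal.ofReal (r ^ n) ∧
      ENNReal.ofReal r ^ (n - 1) * ediam (u '' (ball x r ∩ U)) ≤ m (ball x r)}
  have hmono : Monotone P := by
    rintro j k hjk x ⟨hx, hxO, U, hxU, hU⟩
    have hle : ρ k ≤ ρ j := Nat.one_div_le_one_div hjk
    exact ⟨hx, (ball_subset_ball hle).trans hxO, U, hxU, fun r hr => hU r ⟨hr.1, hr.2.trans_le hle⟩⟩
  have hAP : A = ⋃ j, P j := by
    refine subset_antisymm (fun x hx => ?_) (iUnion_subset fun j x hx => hx.1)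
    obtain ⟨U, hxU, h1, h2⟩ := hA x hx
    obtain ⟨ε, hε, hε'⟩ := (mem_nhdsGT_iff_exists_Ioo_subset).1 (h1.and h2)
    obtain ⟨η, hη, hηO⟩ := Metric.isOpen_iff.1 hO x (hAO hx)
    obtain ⟨j, hj⟩ := exists_nat_one_div_lt (lt_min hε hη)
    refine mem_iUnion.2 ⟨j, hx, (ball_subset_ball (hj.le.trans (min_le_right _ _))).trans hηO,
      U, hxU, fun r hr => hε' ⟨hr.1, hr.2.trans (hj.trans_le (min_le_left _ _))⟩⟩
  rw [hAP, sweep_iUnion, Monotone.measure_iUnion fun j k hjk => sweep_mono u e s (hmono hjk)]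
  exact iSup_le fun j => volume_sweep_le_of_forall_mem_Ioo hn m he hs hO.measurableSet (hρ j)
    (fun x hx => hx.2.1) fun x hx => hx.2.2

lemma exists_cover_tsum_ediam_rpow_le {X : Type*} [EMetricSpace X] [MeasurableSpace X]
    [BorelSpace X] {d : ℝ} {Z : Set X} (hZ : μH[d] Z < ∞) {r : ℝ≥0∞} (hr : 0 < r) :
    ∃ t : ℕ → Set X, Z ⊆ ⋃ i, t i ∧ (∀ i, ediam (t i) ≤ r) ∧
      ∑' i, ⨆ (_ : (t i).Nonempty), ediam (t i) ^ d ≤ μH[d] Z + 1 := by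
  have h : ⨅ t : ℕ → Set X, ⨅ (_ : Z ⊆ ⋃ i, t i), ⨅ (_ : ∀ i, ediam (t i) ≤ r),
      ∑' i, ⨆ (_ : (t i).Nonempty), ediam (t i) ^ d < μH[d] Z + 1 := by
    refine lt_of_le_of_lt ?_ (ENNReal.lt_add_right hZ.ne one_ne_zero)
    rw [Measure.hausdorffMeasure_apply]
    exact le_iSup₂_of_le r hr le_rfl
  simp only [iInf_lt_iff] at h
  obtain ⟨t, ht, hd, hlt⟩ := h
  exact ⟨t, ht, hd, hlt.le⟩

lemma volume_sweep_eq_zero_of_bounded (hn : 2 ≤ n) {u : En n → ℝ} (hu : Continuous u) {e : En n}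
    (he : ‖e‖ = 1) {s : ℝ} (hs : 0 < s) {Z : Set (En n)} (hZ : μH[(n : ℝ) - 1] Z < ∞) {R : ℝ}
    (hb : Z ⊆ closedBall 0 R) : volume (sweep u e s Z) = 0 := by
  have hd : ∀ a : ℝ≥0∞, a ^ ((n : ℝ) - 1) = a ^ (n - 1) := fun a => by
    rw [← ENNReal.rpow_natCast, Nat.cast_sub (by omega), Nat.cast_one]
  by_contra hM
  set H := μH[(n : ℝ) - 1] Z
  set c := tubeConst n * ENNReal.ofReal s * 2 ^ (n - 1) with hc
  obtain ⟨η, hη, hlt⟩ := ENNReal.exists_nnreal_pos_mul_lt (a := c * (H + 1)) (ENNReal.mul_ne_top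
    (ENNReal.mul_ne_top (ENNReal.mul_ne_top tubeConst_ne_top ENNReal.ofReal_ne_top) (by simp))
    (by simp [hZ.ne])) hM
  refine hlt.not_ge ?_
  have huc := (isCompact_closedBall (0 : En n) R).uniformContinuousOn_of_continuous hu.continuousOn
  obtain ⟨r₀, hr₀, hr₀u⟩ := EMetric.uniformContinuousOn_iff.1 huc η (by exact_mod_cast hη)
  obtain ⟨r, hr, hrlt⟩ := exists_between
    (lt_min hr₀ (ENNReal.ofReal_pos.2 (show 0 < s / 2 by positivity)))
  obtain ⟨t, hZt, htd, hsum⟩ := exists_cover_tsum_ediam_rpow_le hZ hr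
  have hpiece : ∀ i, volume (sweep u e s (t i ∩ Z)) ≤
      (η * c) * ⨆ (_ : (t i).Nonempty), ediam (t i) ^ ((n : ℝ) - 1) := by
    intro i
    rcases (t i ∩ Z).eq_empty_or_nonempty with h | ⟨x, hx⟩
    · rw [h]; simp [sweep]
    rw [ciSup_pos ⟨x, hx.1⟩, hd]
    rcases eq_or_ne (ediam (t i)) 0 with h0 | h0
    · have : volume (u '' (t i ∩ Z)) = 0 := by
        have hss : (t i ∩ Z).Subsingleton := (ediam_eq_zero_iff.1 h0).anti inter_subset_left
        exact (hss.image u).measure_zero _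
      refine (volume_sweep_le _ _ _ _).trans ?_
      simp [this]
    have htop : ediam (t i) ≠ ∞ := (((htd i).trans_lt hrlt).trans_le le_top).ne
    set d := (ediam (t i)).toReal with hdd
    have hd0 : 0 < d := ENNReal.toReal_pos h0 htop
    have hde : ediam (t i) = ENNReal.ofReal d := (ENNReal.ofReal_toReal htop).symm
    have hds : 2 * d ≤ s := by
      have := ((htd i).trans_lt hrlt).trans_le (min_le_right _ _)
      rw [hde, ENNReal.ofReal_lt_ofReal_iff (by positivity)] at this
      linarith
    have hsub : t i ∩ Z ⊆ ball x (2 * d) := by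
      intro y hy
      have := edist_le_ediam_of_mem hy.1 hx.1
      rw [hde, edist_dist, ENNReal.ofReal_le_ofReal_iff hd0.le] at this
      rw [mem_ball]; linarith
    have him : ediam (u '' (t i ∩ Z)) ≤ η := by
      refine ediam_le ?_
      rintro _ ⟨y, hy, rfl⟩ _ ⟨z, hz, rfl⟩
      exact (hr₀u (hb hy.2) (hb hz.2) (((edist_le_ediam_of_mem hy.1 hz.1).trans_lt
        ((htd i).trans_lt hrlt)).trans_le (min_le_left _ _))).le
    calc volume (sweep u e s (t i ∩ Z))
        ≤ volume (tube e s (t i ∩ Z)) * volume (u '' (t i ∩ Z)) := volume_sweep_le _ _ _ _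
      _ ≤ (tubeConst n * (ENNReal.ofReal s * ENNReal.ofReal (2 * d) ^ (n - 1))) * η := by
          gcongr
          · exact (measure_mono (tube_mono e s hsub)).trans
              (volume_tube_ball_le (by omega) he (by positivity) hds x)
          · exact (Real.volume_le_diam _).trans him
      _ = _ := by
          rw [ENNReal.ofReal_mul zero_le_two, mul_pow, hde, hc]
          simp only [ENNReal.ofReal_ofNat]
          ring
  calc volume (sweep u e s Z) ≤ ∑' i, volume (sweep u e s (t i ∩ Z)) := by
        refine (measure_mono ?_).trans (measure_iUnion_le _)
        rw [← sweep_iUnion, ← iUnion_inter]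
        exact sweep_mono u e s fun x hx => ⟨hZt hx, hx⟩
    _ ≤ (η * c) * ∑' i, ⨆ (_ : (t i).Nonempty), ediam (t i) ^ ((n : ℝ) - 1) := by
        rw [← ENNReal.tsum_mul_left]
        exact ENNReal.tsum_le_tsum hpiece
    _ ≤ (η * c) * (H + 1) := by gcongr
    _ = _ := by ring

lemma volume_sweep_eq_zero_of_hausdorffMeasure (hn : 2 ≤ n) {u : En n → ℝ} (hu : Continuous u)
    {e : En n} (he : ‖e‖ = 1) {s : ℝ} (hs : 0 < s) {E : Set (En n)} {Es : ℕ → Set (En n)}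
    (hE : E ⊆ ⋃ j, Es j) (hEs : ∀ j, μH[(n : ℝ) - 1] (Es j) < ∞) :
    volume (sweep u e s E) = 0 := by
  have hsub : E ⊆ ⋃ j, ⋃ k : ℕ, Es j ∩ closedBall 0 k := by
    simp_rw [← inter_iUnion, iUnion_closedBall_nat, inter_univ]
    exact hE
  refine measure_mono_null (sweep_mono u e s hsub) ?_
  simp_rw [sweep_iUnion]
  simp only [measure_iUnion_null_iff]
  exact fun j k => volume_sweep_eq_zero_of_bounded hn hu he hs
    ((measure_mono inter_subset_left).trans_lt (hEs j)) inter_subset_right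

/-- The measure of a sweep, as an outer measure in the swept set. -/
def sweepMeasure (u : En n → ℝ) (e : En n) (s : ℝ) : OuterMeasure (En n) where
  measureOf A := volume (sweep u e s A)
  empty := by simp [sweep]
  mono h := measure_mono (sweep_mono u e s h)
  iUnion_nat A _ := by rw [sweep_iUnion]; exact measure_iUnion_le _

lemma sweepMeasure_apply (u : En n → ℝ) (e : En n) (s : ℝ) (A : Set (En n)) :
    sweepMeasure u e s A = volume (sweep u e s A) := rfl

lemma outerMeasure_le_of_cover {X : Type*} [MeasurableSpace X] (M : OuterMeasure X)
    (μ : Measure X) {T : ℕ → Set X} (hT : ∀ j, MeasurableSet (T j)) {N A : Set X} (hN : M N = 0)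
    (hA : MeasurableSet A) (hcov : A ⊆ N ∪ ⋃ j, T j)
    (h : ∀ j B, MeasurableSet B → B ⊆ A → B ⊆ T j → M B ≤ μ B) : M A ≤ μ A := by
  have hcov' : A ⊆ N ∪ ⋃ j, A ∩ disjointed T j := by
    rw [← inter_iUnion, iUnion_disjointed]
    exact fun x hx => (hcov hx).imp_right fun h => ⟨hx, h⟩
  have hm : ∀ j, MeasurableSet (A ∩ disjointed T j) := fun j =>
    hA.inter (MeasurableSet.disjointed hT j)
  calc M A ≤ M N + ∑' j, M (A ∩ disjointed T j) :=
        (measure_mono hcov').trans ((measure_union_le _ _).trans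
          (add_le_add_right (measure_iUnion_le _) _))
    _ ≤ 0 + ∑' j, μ (A ∩ disjointed T j) := by
        rw [hN]
        gcongr with j
        exact h j _ (hm j) inter_subset_left (inter_subset_right.trans (disjointed_subset T j))
    _ = μ (⋃ j, A ∩ disjointed T j) := by
        rw [zero_add, measure_iUnion (fun i j hij => ((disjoint_disjointed T hij).mono
          inter_subset_right inter_subset_right)) hm]
    _ ≤ μ A := measure_mono (iUnion_subset fun j => inter_subset_left)

lemma outerMeasure_le_lintegral_of_forall (hn : 2 ≤ n) (M : OuterMeasure (En n))
    (ν : Measure (En n)) [IsFiniteMeasureOnCompacts ν] {W : En n → ℝ≥0∞} (hW : Measurable W)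
    (hW0 : ∀ x, W x ≠ 0) (hWi : ∀ k : ℕ, ∫⁻ x in closedBall 0 k, W x < ∞) {C : ℝ≥0∞}
    (hC : C ≠ ∞)
    (h : ∀ A, MeasurableSet A → ∀ l : ℝ≥0∞, l ≠ 0 → l ≠ ∞ →
      M A ≤ C * (l * (∫⁻ x in A, W x) + l⁻¹ ^ (n - 1) * ν A))
    {A : Set (En n)} (hA : MeasurableSet A) :
    M A ≤ C * (1 + 2 ^ (n - 1)) *
      ∫⁻ x in A, W x * (ν.rnDeriv volume x / W x) ^ ((n : ℝ)⁻¹) := by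
  set J := ν.rnDeriv volume
  have hJ : Measurable J := Measure.measurable_rnDeriv _ _
  have hbdd : ∀ B : Set (En n), (∀ k : ℕ, M (B ∩ closedBall 0 k) = 0) → M B = 0 := by
    intro B hB
    refine measure_mono_null (t := ⋃ k : ℕ, B ∩ closedBall 0 k) ?_ (measure_iUnion_null hB)
    rw [← inter_iUnion, iUnion_closedBall_nat, inter_univ]
  have hnull : ∀ B, MeasurableSet B → volume B = 0 → M B = 0 := by
    intro B hB hB0
    refine hbdd B fun k => ?_
    by_contra hM
    have hνk : ν (B ∩ closedBall 0 k) ≠ ∞ := ((measure_mono inter_subset_right).trans_lt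
      (isCompact_closedBall (0 : En n) k).measure_lt_top).ne
    obtain ⟨η, hη, hlt⟩ := ENNReal.exists_nnreal_pos_mul_lt (ENNReal.mul_ne_top hC hνk) hM
    have hη1 : (min η 1 : ℝ≥0) ≠ 0 := (lt_min hη one_pos).ne'
    have := h (B ∩ closedBall 0 k) (hB.inter isClosed_closedBall.measurableSet)
      ((min η 1 : ℝ≥0) : ℝ≥0∞)⁻¹ (by simp) (by simpa using hη1)
    rw [setLIntegral_measure_zero _ _ (measure_mono_null inter_subset_left hB0), mul_zero, zero_add,
      inv_inv] at this
    refine hlt.not_ge (this.trans ?_)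
    calc C * (((min η 1 : ℝ≥0) : ℝ≥0∞) ^ (n - 1) * ν (B ∩ closedBall 0 k))
        ≤ C * ((η : ℝ≥0∞) * ν (B ∩ closedBall 0 k)) := by
          gcongr
          calc ((min η 1 : ℝ≥0) : ℝ≥0∞) ^ (n - 1) ≤ ((min η 1 : ℝ≥0) : ℝ≥0∞) ^ 1 :=
                pow_le_pow_right_of_le_one' (by exact_mod_cast min_le_right _ _) (by omega)
            _ ≤ η := by rw [pow_one]; exact_mod_cast min_le_left _ _
      _ = _ := by ring
  have hsing := ν.mutuallySingular_singularPart volume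
  set S := hsing.nullSet
  have hSm : MeasurableSet S := hsing.measurableSet_nullSet
  have hνS : ∀ B, MeasurableSet B → B ⊆ S → ν B = ∫⁻ x in B, J x := by
    intro B hB hBS
    conv_lhs => rw [ν.haveLebesgueDecomposition_add volume]
    rw [Measure.add_apply, withDensity_apply _ hB,
      measure_mono_null hBS hsing.measure_nullSet, zero_add]
  have hJ0 : M (S ∩ {x | J x = 0}) = 0 := by
    refine hbdd _ fun k => ?_
    by_contra hM
    set B := S ∩ {x | J x = 0} ∩ closedBall 0 (k : ℝ)
    have hBm : MeasurableSet B := (hSm.inter (hJ (measurableSet_singleton 0))).inter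
      isClosed_closedBall.measurableSet
    have hWB : ∫⁻ x in B, W x ≠ ∞ :=
      ((lintegral_mono_set inter_subset_right).trans_lt (hWi k)).ne
    obtain ⟨η, hη, hlt⟩ := ENNReal.exists_nnreal_pos_mul_lt (ENNReal.mul_ne_top hC hWB) hM
    have := h B hBm η (by exact_mod_cast hη.ne') (by simp)
    rw [hνS B hBm (inter_subset_left.trans inter_subset_left),
      setLIntegral_congr_fun (g := fun _ => 0) hBm (fun x hx => hx.1.2), lintegral_zero, mul_zero,
      add_zero] at this
    refine hlt.not_ge (this.trans_eq (by ring))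
  have hJtop : volume {x | J x = ∞} = 0 := by
    simpa [ae_iff] using Measure.rnDeriv_lt_top ν (volume : Measure (En n))
  have hWtop : volume {x | W x = ∞} = 0 := by
    have hk : ∀ k : ℕ, volume ({x | W x = ∞} ∩ closedBall 0 k) = 0 := fun k => by
      have := ae_lt_top hW (hWi k).ne
      rw [ae_iff, Measure.restrict_apply' isClosed_closedBall.measurableSet] at this
      simpa using this
    refine measure_mono_null (t := ⋃ k : ℕ, {x | W x = ∞} ∩ closedBall 0 k) ?_
      (measure_iUnion_null hk)
    rw [← inter_iUnion, iUnion_closedBall_nat, inter_univ]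
  have hN : M (Sᶜ ∪ {x | J x = ∞} ∪ {x | W x = ∞} ∪ (S ∩ {x | J x = 0})) = 0 := by
    refine measure_union_null (measure_union_null (measure_union_null ?_ ?_) ?_) hJ0
    · exact hnull _ hSm.compl hsing.measure_compl_nullSet
    · exact hnull _ (hJ (measurableSet_singleton _)) hJtop
    · exact hnull _ (hW (measurableSet_singleton _)) hWtop
  set t : En n → ℝ≥0∞ := fun x => (J x / W x) ^ ((n : ℝ)⁻¹) with ht
  have htm : Measurable t := (hJ.div hW).pow_const _
  set T : ℕ → Set (En n) := fun k => S ∩ {x | W x ≠ ∞} ∩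
    {x | (2 : ℝ≥0∞) ^ (Equiv.intEquivNat.symm k) ≤ t x ∧
      t x < (2 : ℝ≥0∞) ^ (Equiv.intEquivNat.symm k + 1)} with hT
  have hTm : ∀ k, MeasurableSet (T k) := fun k =>
    (hSm.inter (hW (measurableSet_singleton ∞)).compl).inter
      ((measurableSet_le measurable_const htm).inter (measurableSet_lt htm measurable_const))
  have hn0 : (0 : ℝ) < n := by exact_mod_cast (by omega : 0 < n)
  have hcov : A ⊆ (Sᶜ ∪ {x | J x = ∞} ∪ {x | W x = ∞} ∪ (S ∩ {x | J x = 0})) ∪ ⋃ k, T k := by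
    intro x _
    by_cases hxN : x ∈ Sᶜ ∪ {x | J x = ∞} ∪ {x | W x = ∞} ∪ (S ∩ {x | J x = 0})
    · exact Or.inl hxN
    · right
      simp only [mem_union, mem_compl_iff, mem_ofPred_eq, mem_inter_iff, not_or, not_not,
        not_and] at hxN
      obtain ⟨⟨⟨hxS, hxJ⟩, hxW⟩, hxJ0⟩ := hxN
      have ht0 : t x ≠ 0 := by
        simp only [ht, ne_eq, ENNReal.rpow_eq_zero_iff, ENNReal.div_eq_zero_iff, hxJ0 hxS, hxW]
        simp [hn0.le, hn0]
      have htt : t x ≠ ∞ := by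
        refine ENNReal.rpow_ne_top_of_nonneg (by positivity) (ENNReal.div_ne_top hxJ (hW0 x))
      obtain ⟨j, hj⟩ := ENNReal.exists_mem_Ico_zpow ht0 htt (y := 2) (by norm_num) (by simp)
      refine mem_iUnion.2 ⟨Equiv.intEquivNat j, ⟨hxS, hxW⟩, ?_⟩
      simpa using hj
  have key := outerMeasure_le_of_cover M
    ((C * (1 + 2 ^ (n - 1))) • volume.withDensity fun x => W x * t x) hTm hN hA hcov ?_
  · rwa [Measure.smul_apply, smul_eq_mul, withDensity_apply _ hA] at key
  intro k B hB _ hBT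
  rw [Measure.smul_apply, smul_eq_mul, withDensity_apply _ hB]
  set l : ℝ≥0∞ := (2 : ℝ≥0∞) ^ (Equiv.intEquivNat.symm k) with hl
  have hl0 : l ≠ 0 := (ENNReal.zpow_pos (by norm_num) (by simp) _).ne'
  have hl' : l ≠ ∞ := ENNReal.zpow_ne_top (by norm_num) (by simp) _
  refine (h B hB l hl0 hl').trans ?_
  rw [hνS B hB fun x hx => (hBT hx).1.1, ← lintegral_const_mul _ hW, ← lintegral_const_mul _ hJ,
    ← lintegral_add_left (hW.const_mul l), mul_assoc,
    ← lintegral_const_mul (1 + 2 ^ (n - 1)) (f := fun x => W x * t x) (hW.mul htm)]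
  have hWt : Measurable fun x => W x * t x := hW.mul htm
  refine mul_le_mul_right (setLIntegral_mono (hWt.const_mul _) fun x hx => ?_) _
  obtain ⟨⟨-, hxW⟩, h1, h2⟩ := hBT hx
  have htn : t x ^ n * W x = J x := by
    rw [ht]
    simp only
    rw [← ENNReal.rpow_natCast, ← ENNReal.rpow_mul, inv_mul_cancel₀ hn0.ne', ENNReal.rpow_one,
      ENNReal.div_mul_cancel (hW0 x) hxW]
  have h2' : t x ≤ 2 * l := by
    rw [ENNReal.zpow_add (by norm_num) (by simp), zpow_one, mul_comm] at h2
    exact h2.le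
  rw [add_mul, one_mul]
  refine add_le_add ?_ ?_
  · rw [mul_comm]; gcongr
  · calc l⁻¹ ^ (n - 1) * J x = l⁻¹ ^ (n - 1) * (t x ^ (n - 1) * t x * W x) := by
          rw [← htn, pow_sub_one_mul (by omega)]
      _ ≤ l⁻¹ ^ (n - 1) * ((2 * l) ^ (n - 1) * t x * W x) := by gcongr
      _ = (l⁻¹ * l) ^ (n - 1) * (2 ^ (n - 1) * (W x * t x)) := by simp only [mul_pow]; ring
      _ = _ := by rw [ENNReal.inv_mul_cancel hl0 hl', one_pow, one_mul]

/-- The pull-back `A ↦ |F(A)|` of Lebesgue measure under a homeomorphism. -/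
def imageVolume (F : En n ≃ₜ En n) : Measure (En n) := volume.map F.symm

lemma imageVolume_apply (F : En n ≃ₜ En n) (A : Set (En n)) :
    imageVolume F A = volume (F '' A) := by
  rw [imageVolume, ← Homeomorph.toMeasurableEquiv_coe, MeasurableEquiv.map_apply,
    Homeomorph.toMeasurableEquiv_coe, ← F.image_eq_preimage_symm]

instance (F : En n ≃ₜ En n) : IsFiniteMeasureOnCompacts (imageVolume F) :=
  ⟨fun K hK => by rw [imageVolume_apply]; exact (hK.image F.continuous).measure_lt_top⟩

lemma sweepMeasure_le_of_Kfine_lt (hn : 2 ≤ n) (F : En n ≃ₜ En n) (i : Fin n) {e : En n}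
    (he : ‖e‖ = 1) {s : ℝ} (hs : 0 < s) {c : ℝ≥0} {A : Set (En n)} (hA : ∀ x ∈ A, Kfine F x < c)
    {l : ℝ≥0∞} (hl : l ≠ 0) (hl' : l ≠ ∞) :
    sweepMeasure (fun x => F x i) e s A ≤
      sweepConst n * (1 + (volume (ball (0 : En n) 1))⁻¹) * ENNReal.ofReal s *
        (l * (c * volume A) + l⁻¹ ^ (n - 1) * imageVolume F A) := by
  have hn0 : n ≠ 0 := by omega
  set ω := volume (ball (0 : En n) 1)
  have hω0 : ω ≠ 0 := (measure_ball_pos _ _ one_pos).ne'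
  have hω : ω ≠ ∞ := measure_ball_lt_top.ne
  set m : Measure (En n) := (l * c * ω⁻¹) • volume + (l⁻¹ ^ (n - 1)) • imageVolume F with hm
  have : IsFiniteMeasureOnCompacts m := ⟨fun K hK => by
    simp only [hm, Measure.add_apply, Measure.smul_apply, smul_eq_mul]
    refine ENNReal.add_lt_top.2 ⟨ENNReal.mul_lt_top ?_ hK.measure_lt_top,
      ENNReal.mul_lt_top ?_ hK.measure_lt_top⟩
    · exact ENNReal.mul_lt_top (ENNReal.mul_lt_top hl'.lt_top ENNReal.coe_lt_top)
        (ENNReal.inv_lt_top.2 (pos_iff_ne_zero.2 hω0))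
    · exact ENNReal.pow_lt_top (ENNReal.inv_lt_top.2 (pos_iff_ne_zero.2 hl))⟩
  have h := volume_sweep_le_of_eventually hn0 m (u := fun x => F x i) he hs (A := A) ?_
  · rw [sweepMeasure_apply]
    refine h.trans ?_
    simp only [hm, Measure.add_apply, Measure.smul_apply, smul_eq_mul]
    calc _ = sweepConst n * ENNReal.ofReal s * (ω⁻¹ * (l * (c * volume A)) +
          1 * (l⁻¹ ^ (n - 1) * imageVolume F A)) := by ring
      _ ≤ sweepConst n * ENNReal.ofReal s * ((1 + ω⁻¹) * (l * (c * volume A)) +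
          (1 + ω⁻¹) * (l⁻¹ ^ (n - 1) * imageVolume F A)) := by
        gcongr
        · exact le_add_self
        · exact le_self_add
      _ = _ := by ring
  · intro x hx
    obtain ⟨U, hU, hxU, hev⟩ := eventually_mul_ediam_le_of_Kfine_lt hn (hA x hx) hl hl'
    refine ⟨U, hxU, hU.eventually_volume_ball_diff_le hxU hn0 densityDefect_pos, ?_⟩
    filter_upwards [hev, self_mem_nhdsWithin] with r hr hr0
    have hr0 : 0 < r := hr0
    have hL : LipschitzWith 1 fun y : En n => y i := LipschitzWith.of_dist_le_mul fun y z => by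
      rw [NNReal.coe_one, one_mul, Real.dist_eq, dist_eq_norm]
      simpa using PiLp.norm_apply_le (y - z) i
    have hd : ediam ((fun x => F x i) '' (ball x r ∩ U)) ≤ ediam (F '' (ball x r ∩ U)) := by
      simpa [image_image] using hL.ediam_image_le (F '' (ball x r ∩ U))
    have hvol : volume (ball x r) = ENNReal.ofReal r ^ n * ω := by
      rw [Measure.addHaar_ball_of_pos volume x hr0, ENNReal.ofReal_pow hr0.le]
      simp [ω]
    calc _ ≤ ENNReal.ofReal r ^ (n - 1) * ediam (F '' (ball x r ∩ U)) := by gcongr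
      _ ≤ _ := hr
      _ = m (ball x r) := by
        simp only [hm, Measure.add_apply, Measure.smul_apply, smul_eq_mul]
        rw [hvol, imageVolume_apply]
        congr 1
        calc l * c * ENNReal.ofReal r ^ n = l * c * ENNReal.ofReal r ^ n * (ω⁻¹ * ω) := by
              rw [ENNReal.inv_mul_cancel hω0 hω, mul_one]
          _ = _ := by ring

lemma sweepMeasure_le_lintegral_Kfine_add_imageVolume (hn : 2 ≤ n) (F : En n ≃ₜ En n)
    (hmeas : Measurable fun x => Kfine F x) {E : Set (En n)} (hE : ∀ x ∉ E, Kfine F x < ∞)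
    (hsig : ∃ Es : ℕ → Set (En n), E ⊆ ⋃ j, Es j ∧ ∀ j, μH[(n : ℝ) - 1] (Es j) < ∞)
    (i : Fin n) {e : En n} (he : ‖e‖ = 1) {s : ℝ} (hs : 0 < s) {A : Set (En n)}
    (hA : MeasurableSet A) {l : ℝ≥0∞} (hl : l ≠ 0) (hl' : l ≠ ∞) :
    sweepMeasure (fun x => F x i) e s A ≤
      sweepConst n * (1 + (volume (ball (0 : En n) 1))⁻¹) * ENNReal.ofReal s *
        (l * (∫⁻ x in A, (Kfine F x + 1)) + l⁻¹ ^ (n - 1) * imageVolume F A) := by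
  set c := sweepConst n * (1 + (volume (ball (0 : En n) 1))⁻¹) * ENNReal.ofReal s
  set m : Measure (En n) := c • (l • volume.withDensity (fun x => Kfine F x + 1) +
    (l⁻¹ ^ (n - 1)) • imageVolume F) with hm
  have hmB : ∀ B, MeasurableSet B → m B =
      c * (l * (∫⁻ x in B, (Kfine F x + 1)) + l⁻¹ ^ (n - 1) * imageVolume F B) := fun B hB => by
    simp only [hm, Measure.add_apply, Measure.smul_apply, smul_eq_mul]
    rw [withDensity_apply _ hB]
  rw [← hmB A hA]
  obtain ⟨Es, hEs, hEs'⟩ := hsig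
  refine outerMeasure_le_of_cover _ m (N := E)
    (T := fun k : ℕ => {x | (k : ℝ≥0∞) ≤ Kfine F x ∧ Kfine F x < ((k + 1 : ℕ) : ℝ≥0∞)})
    (fun k => (measurableSet_le measurable_const hmeas).inter
      (measurableSet_lt hmeas measurable_const)) ?_ hA ?_ ?_
  · rw [sweepMeasure_apply]
    exact volume_sweep_eq_zero_of_hausdorffMeasure hn (by fun_prop) he hs hEs hEs'
  · intro x _
    by_cases hx : x ∈ E
    · exact Or.inl hx
    · refine Or.inr (mem_iUnion.2 ⟨⌊(Kfine F x).toNNReal⌋₊, ?_⟩)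
      have h1 := Nat.floor_le (zero_le (a := (Kfine F x).toNNReal))
      have h2 := Nat.lt_floor_add_one (Kfine F x).toNNReal
      have h3 := ENNReal.coe_toNNReal (hE x hx).ne
      constructor
      · rw [← h3]; exact_mod_cast h1
      · rw [← h3]; exact_mod_cast h2
  · intro k B hB _ hBT
    rw [hmB B hB]
    refine (sweepMeasure_le_of_Kfine_lt hn F i he hs (c := (k + 1 : ℕ)) (fun x hx => by
      simpa using (hBT hx).2) hl hl').trans ?_
    gcongr
    rw [← setLIntegral_const]
    refine setLIntegral_mono (hmeas.add_const 1) fun x hx => ?_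
    have := (hBT hx).1
    push_cast
    gcongr

/-- The upper gradient density obtained from the Jacobian and the dilatation. -/
def qcDensity (F : En n ≃ₜ En n) (x : En n) : ℝ≥0∞ :=
  (Kfine F x + 1) * ((imageVolume F).rnDeriv volume x / (Kfine F x + 1)) ^ ((n : ℝ)⁻¹)

lemma measurable_qcDensity {F : En n ≃ₜ En n} (hmeas : Measurable fun x => Kfine F x) :
    Measurable (qcDensity F) :=
  (hmeas.add_const 1).mul
    (((Measure.measurable_rnDeriv _ _).div (hmeas.add_const 1)).pow_const _)

/-- The constant relating sweeps to `qcDensity`. -/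
def qcConst (n : ℕ) : ℝ≥0∞ :=
  sweepConst n * (1 + (volume (ball (0 : En n) 1))⁻¹) * (1 + 2 ^ (n - 1))

lemma qcConst_ne_top : qcConst n ≠ ∞ :=
  ENNReal.mul_ne_top (ENNReal.mul_ne_top sweepConst_ne_top (ENNReal.add_ne_top.2
    ⟨one_ne_top, ENNReal.inv_ne_top.2 (measure_ball_pos _ _ one_pos).ne'⟩))
    (ENNReal.add_ne_top.2 ⟨one_ne_top, by simp⟩)

lemma sweepMeasure_le_lintegral_qcDensity (hn : 2 ≤ n) (F : En n ≃ₜ En n)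
    (hmeas : Measurable fun x => Kfine F x)
    (hKint : ∀ k : ℕ, ∫⁻ x in closedBall 0 k, (Kfine F x + 1) < ∞)
    {E : Set (En n)} (hE : ∀ x ∉ E, Kfine F x < ∞)
    (hsig : ∃ Es : ℕ → Set (En n), E ⊆ ⋃ j, Es j ∧ ∀ j, μH[(n : ℝ) - 1] (Es j) < ∞)
    (i : Fin n) {e : En n} (he : ‖e‖ = 1) {s : ℝ} (hs : 0 < s) {A : Set (En n)}
    (hA : MeasurableSet A) :
    sweepMeasure (fun x => F x i) e s A ≤
      qcConst n * ENNReal.ofReal s * ∫⁻ x in A, qcDensity F x := by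
  have hω : (volume (ball (0 : En n) 1))⁻¹ ≠ ∞ :=
    ENNReal.inv_ne_top.2 (measure_ball_pos _ _ one_pos).ne'
  refine (outerMeasure_le_lintegral_of_forall hn _ (imageVolume F) (hmeas.add_const 1)
    (fun x => by simp) hKint (ENNReal.mul_ne_top (ENNReal.mul_ne_top sweepConst_ne_top
      (ENNReal.add_ne_top.2 ⟨one_ne_top, hω⟩)) ENNReal.ofReal_ne_top)
    (fun B hB l hl hl' => sweepMeasure_le_lintegral_Kfine_add_imageVolume hn F hmeas hE hsig i he
      hs hB hl hl') hA).trans_eq ?_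
  simp only [qcDensity, qcConst]
  ring

lemma setLIntegral_enorm_sub_le_sweepMeasure {u : En n → ℝ} (hu : Continuous u) {e : En n} {s : ℝ}
    (hs : 0 ≤ s) {Q A : Set (En n)} (hQ : MeasurableSet Q)
    (hQA : ∀ x ∈ Q, ∀ σ ∈ Icc (0 : ℝ) s, x + σ • e ∈ A) :
    ∫⁻ x in Q, ‖u (x + s • e) - u x‖ₑ ≤ sweepMeasure u e s A := by
  have hus : Continuous fun x => u (x + s • e) := by fun_prop
  have h := volume_regionBetween_eq_lintegral (μ := (volume : Measure (En n)))
    (f := fun x => min (u x) (u (x + s • e))) (g := fun x => max (u x) (u (x + s • e)))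
    (hu.min hus).measurable.aemeasurable (hu.max hus).measurable.aemeasurable hQ
  calc ∫⁻ x in Q, ‖u (x + s • e) - u x‖ₑ
      = ∫⁻ x in Q, ENNReal.ofReal (((fun x => max (u x) (u (x + s • e))) -
          fun x => min (u x) (u (x + s • e))) x) := by
        congr 1 with x
        rw [Pi.sub_apply, max_sub_min_eq_abs, ← Real.norm_eq_abs, ofReal_norm]
    _ = volume (regionBetween (fun x => min (u x) (u (x + s • e)))
          (fun x => max (u x) (u (x + s • e))) Q) := by rw [Measure.volume_eq_prod, h]
    _ ≤ volume (sweep u e s A) := by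
        refine measure_mono fun q ⟨hq, h1, h2⟩ => ?_
        have hc : ContinuousOn (fun σ : ℝ => u (q.1 + σ • e)) (uIcc 0 s) :=
          Continuous.continuousOn (by fun_prop)
        obtain ⟨σ, hσ, hσq⟩ := intermediate_value_uIcc hc
          (show q.2 ∈ uIcc _ _ by simpa [uIcc] using And.intro h1.le h2.le)
        rw [uIcc_of_le hs] at hσ
        exact ⟨σ, hσ, hQA _ hq σ hσ, hσq⟩
    _ = _ := rfl

lemma lintegral_mul_enorm_sub_le {u : En n → ℝ} (hu : Continuous u) {G : En n → ℝ≥0∞}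
    (hG : Measurable G) {e : En n} {s : ℝ} (hs : 0 ≤ s) {C : ℝ≥0∞} (hC : C ≠ ∞)
    (h : ∀ A, MeasurableSet A → sweepMeasure u e s A ≤ C * ∫⁻ x in A, G x) {φ ψ : En n → ℝ}
    (hφ : Measurable φ) (hψ : Measurable ψ) (hφ0 : ∀ x, 0 ≤ φ x) (hψ0 : ∀ x, 0 ≤ ψ x)
    (hφψ : ∀ x, ∀ σ ∈ Icc (0 : ℝ) s, φ x ≤ ψ (x + σ • e)) :
    ∫⁻ x, ENNReal.ofReal (φ x) * ‖u (x + s • e) - u x‖ₑ ≤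
      C * ∫⁻ x, ENNReal.ofReal (ψ x) * G x := by
  have hD : Measurable fun x => ‖u (x + s • e) - u x‖ₑ :=
    ((hu.comp (by fun_prop : Continuous fun x => x + s • e)).sub hu).measurable.enorm
  have key : ∀ {w : En n → ℝ≥0∞} (_ : Measurable w) {θ : En n → ℝ} (_ : Measurable θ)
      (_ : ∀ x, 0 ≤ θ x), ∫⁻ x, ENNReal.ofReal (θ x) * w x =
        ∫⁻ τ in Ioi (0 : ℝ), ∫⁻ x in {x | τ < θ x}, w x := by
    intro w hw θ hθ hθ0
    have := lintegral_eq_lintegral_meas_lt (volume.withDensity w)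
      (Eventually.of_forall hθ0) hθ.aemeasurable
    rw [lintegral_withDensity_eq_lintegral_mul _ hw hθ.ennreal_ofReal] at this
    simp only [Pi.mul_apply, mul_comm (w _)] at this
    rw [this]
    congr 1 with τ
    rw [withDensity_apply _ (measurableSet_lt measurable_const hθ)]
  rw [key hD hφ hφ0, key hG hψ hψ0, ← lintegral_const_mul' _ _ hC]
  refine lintegral_mono fun τ => ?_
  exact (setLIntegral_enorm_sub_le_sweepMeasure (A := {x | τ < ψ x}) hu hs
    (measurableSet_lt measurable_const hφ)
    (fun x (hx : τ < φ x) σ hσ => show τ < ψ (x + σ • e) from hx.trans_le (hφψ x σ hσ))).trans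
    (h _ (measurableSet_lt measurable_const hψ))

lemma integral_slope_mul_eq {u φ : En n → ℝ} (hu : Continuous u) (hφ : Continuous φ)
    (hc : HasCompactSupport φ) (e : En n) (t : ℝ) :
    ∫ x, (t⁻¹ • (φ (x + t • -e) - φ x)) * u x = t⁻¹ * ∫ x, φ x * (u (x + t • e) - u x) := by
  have h1 : Integrable fun x => φ x * u (x + t • e) :=
    (by fun_prop : Continuous fun x => φ x * u (x + t • e)).integrable_of_hasCompactSupport
      hc.mul_right
  have h2 : Integrable fun x => φ x * u x :=
    (by fun_prop : Continuous fun x => φ x * u x).integrable_of_hasCompactSupport hc.mul_right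
  have h3 : Integrable fun x => φ (x - t • e) * u x := by
    have := h1.comp_sub_right (t • e)
    simpa using this
  have h4 : ∫ x, φ (x - t • e) * u x = ∫ x, φ x * u (x + t • e) := by
    have := integral_sub_right_eq_self (μ := (volume : Measure (En n)))
      (fun x => φ x * u (x + t • e)) (t • e)
    simpa using this
  simp only [smul_eq_mul, mul_assoc, smul_neg, ← sub_eq_add_neg]
  rw [integral_const_mul]
  simp only [sub_mul, mul_sub]
  rw [integral_sub h3 h2, integral_sub h1 h2, h4]

lemma enorm_integral_mul_fderiv_le {u : En n → ℝ} (hu : Continuous u) {G : En n → ℝ≥0∞}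
    (hG : Measurable G) (hGi : ∀ K : Set (En n), IsCompact K → ∫⁻ x in K, G x < ∞) {C : ℝ≥0∞}
    (hC : C ≠ ∞) {e : En n} (he : ‖e‖ = 1)
    (h : ∀ s, 0 < s → ∀ A, MeasurableSet A →
      sweepMeasure u e s A ≤ C * ENNReal.ofReal s * ∫⁻ x in A, G x)
    {φ : En n → ℝ} (hφ : ContDiff ℝ 1 φ) (hc : HasCompactSupport φ) :
    ‖∫ x, u x * fderiv ℝ φ x e‖ₑ ≤ C * ∫⁻ x, ‖φ x‖ₑ * G x := by
  obtain ⟨Λ, hΛ⟩ := hφ.lipschitzWith_of_hasCompactSupport hc one_ne_zero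
  set S := cthickening 1 (tsupport φ)
  have hS : IsCompact S := IsCompact.cthickening hc
  have hlim := LipschitzWith.integral_inv_smul_sub_mul_tendsto_integral_lineDeriv_mul'
    (μ := (volume : Measure (En n))) hΛ hc hu (-e)
  have heq : ‖∫ x, lineDeriv ℝ φ x (-e) * u x‖ₑ = ‖∫ x, u x * fderiv ℝ φ x e‖ₑ := by
    rw [← enorm_neg, ← integral_neg]
    congr 2 with x
    rw [((hφ.differentiable one_ne_zero) x).lineDeriv_eq_fderiv, map_neg]
    ring
  rw [← heq]
  have hbound : ∀ᶠ t : ℝ in 𝓝[>] 0,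
      ‖∫ x, (t⁻¹ • (φ (x + t • -e) - φ x)) * u x‖ₑ ≤
        C * ((∫⁻ x, ‖φ x‖ₑ * G x) + ENNReal.ofReal (Λ * t) * ∫⁻ x in S, G x) := by
    filter_upwards [Ioc_mem_nhdsGT zero_lt_one] with t ht
    have ht0 : 0 < t := ht.1
    set ψ : En n → ℝ := S.indicator fun x => ‖φ x‖ + Λ * t with hψ
    have hφψ : ∀ x, ∀ σ ∈ Icc (0 : ℝ) t, ‖φ x‖ ≤ ψ (x + σ • e) := by
      intro x σ hσ
      have hd : dist x (x + σ • e) ≤ σ := by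
        rw [dist_self_add_right, norm_smul, he, mul_one, Real.norm_eq_abs, abs_of_nonneg hσ.1]
      by_cases hx : x + σ • e ∈ S
      · rw [hψ, indicator_of_mem hx]
        have h1 := hΛ.dist_le_mul x (x + σ • e)
        have h2 : ‖φ x‖ ≤ ‖φ (x + σ • e)‖ + dist (φ x) (φ (x + σ • e)) := by
          rw [dist_eq_norm]
          have := norm_add_le (φ (x + σ • e)) (φ x - φ (x + σ • e))
          simpa using this
        have h3 : (Λ : ℝ) * dist x (x + σ • e) ≤ Λ * t :=
          mul_le_mul_of_nonneg_left (hd.trans hσ.2) Λ.2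
        linarith
      · have hx' : x ∉ tsupport φ := fun hx' => hx <|
          mem_cthickening_of_dist_le _ x _ _ hx' (by rw [dist_comm]; linarith [hσ.2, ht.2])
        rw [image_eq_zero_of_notMem_tsupport hx', hψ, indicator_of_notMem hx, norm_zero]
    have key := lintegral_mul_enorm_sub_le hu hG ht0.le
      (ENNReal.mul_ne_top hC ENNReal.ofReal_ne_top) (h t ht0) (φ := fun x => ‖φ x‖) (ψ := ψ)
      hφ.continuous.norm.measurable
      ((hφ.continuous.norm.measurable.add_const _).indicator hS.measurableSet)
      (fun x => norm_nonneg _)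
      (fun x => indicator_nonneg (fun x _ => by positivity) x) hφψ
    have hψG : ∫⁻ x, ENNReal.ofReal (ψ x) * G x ≤
        (∫⁻ x, ‖φ x‖ₑ * G x) + ENNReal.ofReal (Λ * t) * ∫⁻ x in S, G x := by
      rw [← lintegral_const_mul _ hG, ← lintegral_indicator hS.measurableSet,
        ← lintegral_add_left (f := fun x => ‖φ x‖ₑ * G x)
          (hφ.continuous.measurable.enorm.mul hG)]
      refine lintegral_mono fun x => ?_
      by_cases hx : x ∈ S
      · simp only [hψ, indicator_of_mem hx]
        rw [ENNReal.ofReal_add (norm_nonneg _) (by positivity), add_mul, ofReal_norm]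
      · simp [hψ, indicator_of_notMem hx]
    rw [integral_slope_mul_eq hu hφ.continuous hc]
    calc ‖t⁻¹ * ∫ x, φ x * (u (x + t • e) - u x)‖ₑ
        ≤ ENNReal.ofReal t⁻¹ * ∫⁻ x, ENNReal.ofReal ‖φ x‖ * ‖u (x + t • e) - u x‖ₑ := by
          rw [enorm_mul, Real.enorm_eq_ofReal (by positivity)]
          gcongr
          refine (enorm_integral_le_lintegral_enorm _).trans_eq ?_
          simp only [enorm_mul, ofReal_norm]
      _ ≤ ENNReal.ofReal t⁻¹ * (C * ENNReal.ofReal t *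
            ((∫⁻ x, ‖φ x‖ₑ * G x) + ENNReal.ofReal (Λ * t) * ∫⁻ x in S, G x)) := by
          gcongr
          exact key.trans (by gcongr)
      _ = (ENNReal.ofReal t⁻¹ * ENNReal.ofReal t) * (C *
            ((∫⁻ x, ‖φ x‖ₑ * G x) + ENNReal.ofReal (Λ * t) * ∫⁻ x in S, G x)) := by ring
      _ = _ := by
          rw [← ENNReal.ofReal_mul (by positivity), inv_mul_cancel₀ ht0.ne', ENNReal.ofReal_one,
            one_mul]
  refine le_of_tendsto_of_tendsto hlim.enorm ?_ hbound
  have h0 : Tendsto (fun t : ℝ => ENNReal.ofReal (Λ * t)) (𝓝[>] 0) (𝓝 0) := by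
    have : Continuous fun t : ℝ => ENNReal.ofReal (Λ * t) :=
      ENNReal.continuous_ofReal.comp (continuous_const_mul _)
    simpa using (this.tendsto 0).mono_left nhdsWithin_le_nhds
  have h1 := ENNReal.Tendsto.mul_const h0 (Or.inr (hGi S hS).ne)
  have h2 := ENNReal.Tendsto.const_mul (h1.const_add (∫⁻ x, ‖φ x‖ₑ * G x)) (Or.inr hC)
  simpa using h2

lemma exists_inner_eq_of_abs_le {V H : Type*} [AddCommGroup V] [Module ℝ V] [NormedAddCommGroup H]
    [InnerProductSpace ℝ H] [CompleteSpace H] (ι : V →ₗ[ℝ] H) (T : V →ₗ[ℝ] ℝ) {c : ℝ}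
    (hT : ∀ v, |T v| ≤ c * ‖ι v‖) : ∃ h : H, ∀ v, T v = inner ℝ h (ι v) := by
  obtain ⟨σ, hσ⟩ := ι.rangeRestrict.exists_rightInverse_of_surjective
    (LinearMap.range_rangeRestrict ι)
  have hσ' : ∀ y : LinearMap.range ι, ι (σ y) = y := fun y =>
    congrArg Subtype.val (LinearMap.congr_fun hσ y)
  set T' : StrongDual ℝ (LinearMap.range ι) := (T ∘ₗ σ).mkContinuous c fun y => by
    simpa [hσ'] using hT (σ y) with hT'
  obtain ⟨Φ, hΦ, -⟩ := _root_.exists_extension_norm_eq (LinearMap.range ι) T'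
  refine ⟨(InnerProductSpace.toDual ℝ H).symm Φ, fun v => ?_⟩
  rw [InnerProductSpace.toDual_symm_apply]
  have h1 := hΦ ⟨ι v, LinearMap.mem_range_self ι v⟩
  rw [h1]
  have h2 : T (σ ⟨ι v, LinearMap.mem_range_self ι v⟩ - v) = 0 := by
    have := hT (σ ⟨ι v, LinearMap.mem_range_self ι v⟩ - v)
    rw [map_sub ι, hσ', sub_self, norm_zero, mul_zero] at this
    exact abs_nonpos_iff.1 this
  rw [map_sub, sub_eq_zero] at h2
  exact h2.symm

lemma setIntegral_nonneg_of_forall_contDiff {d : En n → ℝ} (hd : LocallyIntegrable d)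
    (h : ∀ φ : En n → ℝ, ContDiff ℝ 1 φ → HasCompactSupport φ → (∀ x, 0 ≤ φ x) →
      0 ≤ ∫ x, φ x * d x) {K : Set (En n)} (hK : IsCompact K) : 0 ≤ ∫ x in K, d x := by
  have hε : ∀ j : ℕ, (0 : ℝ) < 1 / ((j : ℝ) + 1) := fun j => Nat.one_div_pos_of_nat
  choose ψ hψ hc hs h0 h1 hK1 using fun j : ℕ =>
    exists_contDiff_bump hK isOpen_thickening (self_subset_thickening (hε j) K)
  have hdS : IntegrableOn d (cthickening 1 K) :=
    hd.integrableOn_isCompact hK.cthickening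
  have hlim : Tendsto (fun j => ∫ x, ψ j x * d x) atTop (𝓝 (∫ x, K.indicator d x)) := by
    refine tendsto_integral_of_dominated_convergence
      (fun x => (cthickening 1 K).indicator (fun x => ‖d x‖) x) (fun j => ?_) ?_ (fun j => ?_) ?_
    · exact (hψ j).continuous.aestronglyMeasurable.mul hd.aestronglyMeasurable
    · exact IntegrableOn.integrable_indicator hdS.norm isClosed_cthickening.measurableSet
    · refine Eventually.of_forall fun x => ?_
      by_cases hx : x ∈ cthickening 1 K
      · rw [indicator_of_mem hx, norm_mul, Real.norm_of_nonneg (h0 j x)]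
        exact mul_le_of_le_one_left (norm_nonneg _) (h1 j x)
      · have : ψ j x = 0 := by
          refine image_eq_zero_of_notMem_tsupport fun hx' => hx ?_
          refine thickening_subset_cthickening _ _ (thickening_mono ?_ K (hs j hx'))
          rw [div_le_one (by positivity)]
          linarith [(Nat.cast_nonneg j : (0 : ℝ) ≤ j)]
        simp [this, indicator_of_notMem hx]
    · refine Eventually.of_forall fun x => ?_
      by_cases hx : x ∈ K
      · rw [indicator_of_mem hx]
        simp [hK1 _ x hx]
      · rw [indicator_of_notMem hx]
        refine tendsto_const_nhds.congr' ?_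
        have hxK : x ∉ closure K := by rwa [hK.isClosed.closure_eq]
        rw [closure_eq_iInter_cthickening] at hxK
        simp only [mem_iInter, not_forall] at hxK
        obtain ⟨ε, hε0, hxε⟩ := hxK
        have := tendsto_one_div_add_atTop_nhds_zero_nat.eventually_lt_const hε0
        filter_upwards [this] with j hj
        have : ψ j x = 0 := image_eq_zero_of_notMem_tsupport fun hx' => hxε
          (thickening_subset_cthickening _ _ (thickening_mono hj.le K (hs j hx')))
        simp [this]
  rw [← integral_indicator hK.measurableSet]
  exact ge_of_tendsto' hlim fun j => h _ (hψ j) (hc j) (h0 j)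

lemma ae_nonneg_of_forall_contDiff {d : En n → ℝ} (hd : LocallyIntegrable d) (hdm : Measurable d)
    (h : ∀ φ : En n → ℝ, ContDiff ℝ 1 φ → HasCompactSupport φ → (∀ x, 0 ≤ φ x) →
      0 ≤ ∫ x, φ x * d x) : ∀ᵐ x, 0 ≤ d x := by
  rw [ae_iff]
  by_contra hpos
  obtain ⟨K, hKd, hK, hK0⟩ := (measurableSet_lt hdm measurable_const).exists_lt_isCompact
    (μ := (volume : Measure (En n))) (r := 0) (by simpa [pos_iff_ne_zero] using hpos)
  have hKint : IntegrableOn (fun x => -d x) K := (hd.integrableOn_isCompact hK).neg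
  have h1 := setIntegral_nonneg_of_forall_contDiff hd h hK
  have h2 : 0 < ∫ x in K, -d x := by
    rw [setIntegral_pos_iff_support_of_nonneg_ae _ hKint]
    · refine hK0.trans_le (measure_mono fun x hx => ⟨?_, hx⟩)
      have : d x < 0 := hKd hx
      simp [this.ne]
    · filter_upwards [ae_restrict_mem hK.measurableSet] with x hx
      have : d x < 0 := hKd hx
      simp [this.le]
  rw [integral_neg] at h2
  linarith

lemma ae_lt_top_of_forall_isCompact {Γ : En n → ℝ≥0∞} (hΓ : Measurable Γ)
    (hΓi : ∀ K : Set (En n), IsCompact K → ∫⁻ x in K, Γ x < ∞) : ∀ᵐ x, Γ x < ∞ := by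
  have h : ∀ k : ℕ, ∀ᵐ x, x ∈ closedBall (0 : En n) k → Γ x < ∞ := fun k =>
    (ae_restrict_iff' isClosed_closedBall.measurableSet).1
      (ae_lt_top hΓ (hΓi _ (isCompact_closedBall 0 _)).ne)
  filter_upwards [ae_all_iff.2 h] with x hx
  obtain ⟨k, hk⟩ := exists_nat_ge ‖x‖
  exact hx k (by simpa using hk)

lemma locallyIntegrable_toReal {Γ : En n → ℝ≥0∞} (hΓ : Measurable Γ)
    (hΓi : ∀ K : Set (En n), IsCompact K → ∫⁻ x in K, Γ x < ∞) :
    LocallyIntegrable fun x => (Γ x).toReal :=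
  locallyIntegrable_iff.2 fun K hK =>
    integrable_toReal_of_lintegral_ne_top hΓ.aemeasurable (hΓi K hK).ne

lemma exists_weight {Γ : En n → ℝ≥0∞} (hΓ : Measurable Γ)
    (hΓi : ∀ K : Set (En n), IsCompact K → ∫⁻ x in K, Γ x < ∞) :
    ∃ w : En n → ℝ≥0∞, Measurable w ∧ (∀ x, w x ≠ 0) ∧ (∀ x, w x ≠ ∞) ∧
      (∀ k : ℕ, ∃ c : ℝ≥0∞, c ≠ 0 ∧ ∀ x ∈ ball (0 : En n) k, c ≤ w x) ∧
      ∫⁻ x, w x * Γ x ≠ ∞ := by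
  set I : ℕ → ℝ≥0∞ := fun k => ∫⁻ x in ball (0 : En n) k, Γ x with hI
  have hIt : ∀ k, I k ≠ ∞ := fun k =>
    ((lintegral_mono_set ball_subset_closedBall).trans_lt (hΓi _ (isCompact_closedBall 0 _))).ne
  set c : ℕ → ℝ≥0∞ := fun k => 2⁻¹ ^ k * (1 + I k)⁻¹ with hc
  have hc0 : ∀ k, c k ≠ 0 := fun k =>
    mul_ne_zero (pow_ne_zero _ (by simp)) (ENNReal.inv_ne_zero.2 (by simp [hIt k]))
  have hcle : ∀ k, c k ≤ 2⁻¹ ^ k := fun k =>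
    mul_le_of_le_one_right' (ENNReal.inv_le_one.2 le_self_add)
  have hcI : ∀ k, c k * I k ≤ 2⁻¹ ^ k := fun k => by
    rw [hc, mul_assoc]
    refine mul_le_of_le_one_right' ?_
    rw [mul_comm, ← div_eq_mul_inv]
    exact ENNReal.div_le_of_le_mul (by rw [one_mul]; exact le_add_self)
  have hgeo : ∑' k : ℕ, (2⁻¹ : ℝ≥0∞) ^ k ≠ ∞ := by
    rw [ENNReal.tsum_geometric]; simp
  have hcm : ∀ k : ℕ, Measurable ((ball (0 : En n) k).indicator fun _ => c k) := fun k =>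
    measurable_const.indicator isOpen_ball.measurableSet
  have hlow : ∀ k : ℕ, ∀ x ∈ ball (0 : En n) k,
      c k ≤ ∑' j : ℕ, (ball (0 : En n) j).indicator (fun _ => c j) x := fun k x hx => by
    have := ENNReal.le_tsum (f := fun j : ℕ => (ball (0 : En n) j).indicator (fun _ => c j) x) k
    simpa only [indicator_of_mem hx] using this
  refine ⟨fun x => ∑' k : ℕ, (ball (0 : En n) k).indicator (fun _ => c k) x,
    Measurable.tsum hcm, fun x => ?_, fun x => ?_, fun k => ⟨c k, hc0 k, hlow k⟩, ?_⟩
  · obtain ⟨k, hk⟩ := exists_nat_gt ‖x‖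
    exact ((pos_iff_ne_zero.2 (hc0 k)).trans_le (hlow k x (by simpa using hk))).ne'
  · refine ne_top_of_le_ne_top hgeo (ENNReal.tsum_le_tsum fun k => ?_)
    exact (indicator_le_self' (fun _ _ => zero_le) x).trans (hcle k)
  · refine ne_top_of_le_ne_top hgeo ?_
    simp_rw [← ENNReal.tsum_mul_right]
    rw [lintegral_tsum (f := fun (k : ℕ) x => (ball (0 : En n) k).indicator (fun _ => c k) x * Γ x)
      fun k => ((hcm k).mul hΓ).aemeasurable]
    refine ENNReal.tsum_le_tsum fun k => ?_
    refine le_trans (le_of_eq ?_) (hcI k)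
    rw [hI, ← lintegral_const_mul _ hΓ, ← lintegral_indicator isOpen_ball.measurableSet]
    congr 1 with x
    by_cases hx : x ∈ ball (0 : En n) k <;> simp [hx]

/-- The space of compactly supported `C¹` test functions. -/
def testFunctions (n : ℕ) : Submodule ℝ (En n → ℝ) where
  carrier := {φ | ContDiff ℝ 1 φ ∧ HasCompactSupport φ}
  add_mem' h h' := ⟨h.1.add h'.1, h.2.add h'.2⟩
  zero_mem' := ⟨contDiff_const, HasCompactSupport.zero⟩
  smul_mem' c _ h := ⟨contDiff_const.smul h.1, h.2.smul_left (f := fun _ => c)⟩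

lemma exists_density_of_enorm_le (T : testFunctions n →ₗ[ℝ] ℝ) {Γ : En n → ℝ≥0∞}
    (hΓ : Measurable Γ) (hΓi : ∀ K : Set (En n), IsCompact K → ∫⁻ x in K, Γ x < ∞)
    (hT : ∀ φ : testFunctions n, ‖T φ‖ₑ ≤ ∫⁻ x, ‖(φ : En n → ℝ) x‖ₑ * Γ x) :
    ∃ g : En n → ℝ, Measurable g ∧ LocallyIntegrable g ∧
      ∀ φ : testFunctions n, T φ = ∫ x, (φ : En n → ℝ) x * g x := by
  obtain ⟨w, hw, hw0, hwt, hwlow, hwi⟩ := exists_weight hΓ hΓi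
  have hΓw : Measurable fun x => Γ x / w x := hΓ.div hw
  set μ : Measure (En n) := volume.withDensity fun x => Γ x / w x with hμ
  have hfin : IsFiniteMeasureOnCompacts μ := ⟨fun K hK => by
    obtain ⟨R, hR⟩ := hK.isBounded.subset_ball (0 : En n)
    obtain ⟨k, hk⟩ := exists_nat_ge R
    obtain ⟨c, hc0, hc⟩ := hwlow k
    rw [hμ, withDensity_apply _ hK.measurableSet]
    calc ∫⁻ x in K, Γ x / w x ≤ ∫⁻ x in K, c⁻¹ * Γ x := by
          refine setLIntegral_mono (hΓ.const_mul _) fun x hx => ?_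
          rw [mul_comm, ← div_eq_mul_inv]
          exact ENNReal.div_le_div_left (hc x (ball_subset_ball hk (hR hx))) _
      _ = c⁻¹ * ∫⁻ x in K, Γ x := lintegral_const_mul _ hΓ
      _ < ∞ := ENNReal.mul_lt_top (ENNReal.inv_lt_top.2 (pos_iff_ne_zero.2 hc0)) (hΓi K hK)⟩
  have hLp : ∀ φ : testFunctions n, MemLp (φ : En n → ℝ) 2 μ := fun φ =>
    φ.2.1.continuous.memLp_of_hasCompactSupport φ.2.2
  set ι : testFunctions n →ₗ[ℝ] Lp ℝ 2 μ :=
    { toFun := fun φ => (hLp φ).toLp _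
      map_add' := fun φ ψ => MemLp.toLp_add (hLp φ) (hLp ψ)
      map_smul' := fun c φ => MemLp.toLp_const_smul c (hLp φ) } with hι
  set S : ℝ≥0∞ := (∫⁻ x, w x * Γ x) ^ (1 / (2 : ℝ)) with hS
  have hSt : S ≠ ∞ := ENNReal.rpow_ne_top_of_nonneg (by norm_num) hwi
  have hbound : ∀ φ : testFunctions n, |T φ| ≤ S.toReal * ‖ι φ‖ := by
    intro φ
    have hφm : Measurable fun x => ‖(φ : En n → ℝ) x‖ₑ := φ.2.1.continuous.measurable.enorm
    have h1 : ∫⁻ x, ‖(φ : En n → ℝ) x‖ₑ * Γ x ≤ eLpNorm (φ : En n → ℝ) 2 μ * S := by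
      calc ∫⁻ x, ‖(φ : En n → ℝ) x‖ₑ * Γ x = ∫⁻ x, ‖(φ : En n → ℝ) x‖ₑ * w x ∂μ := by
            rw [hμ, lintegral_withDensity_eq_lintegral_mul _ hΓw
              (g := fun x => ‖(φ : En n → ℝ) x‖ₑ * w x) (hφm.mul hw)]
            congr 1 with x
            simp only [Pi.mul_apply]
            rw [mul_left_comm, ENNReal.div_mul_cancel (hw0 x) (hwt x)]
        _ ≤ (∫⁻ x, ‖(φ : En n → ℝ) x‖ₑ ^ (2 : ℝ) ∂μ) ^ (1 / (2 : ℝ)) *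
              (∫⁻ x, w x ^ (2 : ℝ) ∂μ) ^ (1 / (2 : ℝ)) :=
            ENNReal.lintegral_mul_le_Lp_mul_Lq μ Real.HolderConjugate.two_two hφm.aemeasurable
              hw.aemeasurable
        _ = _ := by
            rw [eLpNorm_eq_lintegral_rpow_enorm_toReal two_ne_zero (by simp), hS]
            congr 2
            rw [hμ, lintegral_withDensity_eq_lintegral_mul _ hΓw (hw.pow_const _)]
            congr 1 with x
            simp only [Pi.mul_apply, ENNReal.rpow_two]
            rw [sq, ← mul_assoc, ENNReal.div_mul_cancel (hw0 x) (hwt x), mul_comm]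
    have h2 := (hT φ).trans h1
    have h3 : ‖ι φ‖ = (eLpNorm (φ : En n → ℝ) 2 μ).toReal := Lp.norm_toLp _ (hLp φ)
    rw [h3, ← ENNReal.toReal_mul, mul_comm, ← Real.norm_eq_abs, ← toReal_enorm]
    exact ENNReal.toReal_mono (ENNReal.mul_ne_top (hLp φ).eLpNorm_ne_top hSt) h2
  obtain ⟨h, hhm, hhi, hh⟩ : ∃ h : En n → ℝ, Measurable h ∧
      (∀ K : Set (En n), IsCompact K → Integrable h (μ.restrict K)) ∧
      ∀ φ : testFunctions n, T φ = ∫ x, h x * (φ : En n → ℝ) x ∂μ := by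
    obtain ⟨h, hh⟩ := exists_inner_eq_of_abs_le ι T hbound
    refine ⟨h, (Lp.stronglyMeasurable h).measurable, fun K hK => ?_, fun φ => ?_⟩
    · have : IsFiniteMeasure (μ.restrict K) := ⟨by
        rw [Measure.restrict_apply_univ]; exact hK.measure_lt_top⟩
      exact ((Lp.memLp h).restrict K).integrable (by norm_num)
    · rw [hh, L2.inner_def]
      refine integral_congr_ae ?_
      filter_upwards [(hLp φ).coeFn_toLp] with x hx
      have : ι φ x = (φ : En n → ℝ) x := hx
      rw [this]
      simp [mul_comm]
  have hae : ∀ᵐ x, Γ x / w x < ∞ := by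
    filter_upwards [ae_lt_top_of_forall_isCompact hΓ hΓi] with x hx
    exact ENNReal.div_lt_top hx.ne (hw0 x)
  refine ⟨fun x => (Γ x / w x).toReal * h x, hΓw.ennreal_toReal.mul hhm, ?_, fun φ => ?_⟩
  · refine locallyIntegrable_iff.2 fun K hK => ?_
    have h1 := hhi K hK
    rw [hμ, restrict_withDensity hK.measurableSet,
      integrable_withDensity_iff_integrable_smul' hΓw (ae_restrict_of_ae hae)] at h1
    exact h1
  · rw [hh, hμ, integral_withDensity_eq_integral_toReal_smul hΓw hae]
    congr 1 with x
    simp only [smul_eq_mul]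
    ring

lemma ae_enorm_le_of_forall_contDiff {g : En n → ℝ} (hgm : Measurable g)
    (hg : LocallyIntegrable g) {Γ : En n → ℝ≥0∞} (hΓ : Measurable Γ)
    (hΓi : ∀ K : Set (En n), IsCompact K → ∫⁻ x in K, Γ x < ∞)
    (h : ∀ φ : En n → ℝ, ContDiff ℝ 1 φ → HasCompactSupport φ →
      ‖∫ x, φ x * g x‖ₑ ≤ ∫⁻ x, ‖φ x‖ₑ * Γ x) : ∀ᵐ x, ‖g x‖ₑ ≤ Γ x := by
  have hγ := locallyIntegrable_toReal hΓ hΓi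
  have hfin := ae_lt_top_of_forall_isCompact hΓ hΓi
  have key : ∀ φ : En n → ℝ, ContDiff ℝ 1 φ → HasCompactSupport φ → (∀ x, 0 ≤ φ x) →
      Integrable (fun x => φ x * g x) ∧ Integrable (fun x => φ x * (Γ x).toReal) ∧
      |∫ x, φ x * g x| ≤ ∫ x, φ x * (Γ x).toReal := by
    intro φ hφ hc h0
    have i1 : Integrable (fun x => φ x * (Γ x).toReal) :=
      hγ.integrable_smul_left_of_hasCompactSupport hφ.continuous hc
    refine ⟨hg.integrable_smul_left_of_hasCompactSupport hφ.continuous hc, i1, ?_⟩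
    have h1 := h φ hφ hc
    have h2 : ∫⁻ x, ‖φ x‖ₑ * Γ x = ENNReal.ofReal (∫ x, φ x * (Γ x).toReal) := by
      rw [ofReal_integral_eq_lintegral_ofReal i1
        (Eventually.of_forall fun x => mul_nonneg (h0 x) ENNReal.toReal_nonneg)]
      refine lintegral_congr_ae ?_
      filter_upwards [hfin] with x hx
      rw [ENNReal.ofReal_mul (h0 x), ENNReal.ofReal_toReal hx.ne, Real.enorm_of_nonneg (h0 x)]
    rw [h2, ← ofReal_norm, ENNReal.ofReal_le_ofReal_iff (integral_nonneg fun x =>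
      mul_nonneg (h0 x) ENNReal.toReal_nonneg), Real.norm_eq_abs] at h1
    exact h1
  have hp := ae_nonneg_of_forall_contDiff (hγ.sub hg) (hΓ.ennreal_toReal.sub hgm)
    fun φ hφ hc h0 => by
      obtain ⟨i1, i2, hle⟩ := key φ hφ hc h0
      simp only [Pi.sub_apply, mul_sub]
      rw [integral_sub i2 i1]
      linarith [le_abs_self (∫ x, φ x * g x)]
  have hm := ae_nonneg_of_forall_contDiff (hγ.add hg) (hΓ.ennreal_toReal.add hgm)
    fun φ hφ hc h0 => by
      obtain ⟨i1, i2, hle⟩ := key φ hφ hc h0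
      simp only [Pi.add_apply, mul_add]
      rw [integral_add i2 i1]
      linarith [neg_abs_le (∫ x, φ x * g x)]
  filter_upwards [hp, hm, hfin] with x h1 h2 h3
  simp only [Pi.sub_apply, Pi.add_apply] at h1 h2
  rw [← ofReal_norm, ← ENNReal.ofReal_toReal h3.ne]
  refine ENNReal.ofReal_le_ofReal ?_
  rw [Real.norm_eq_abs, abs_le]
  constructor <;> linarith

lemma integrable_continuous_mul_fderiv {u φ : En n → ℝ} (hu : Continuous u)
    (hφ : ContDiff ℝ 1 φ) (hc : HasCompactSupport φ) (v : En n) :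
    Integrable fun x => u x * fderiv ℝ φ x v :=
  Continuous.integrable_of_hasCompactSupport
    (hu.mul ((hφ.continuous_fderiv one_ne_zero).clm_apply continuous_const))
    ((hc.fderiv_apply (𝕜 := ℝ) v).mul_left)

lemma exists_weak_directional_derivative {u : En n → ℝ} (hu : Continuous u) (e : En n)
    {Γ : En n → ℝ≥0∞} (hΓ : Measurable Γ)
    (hΓi : ∀ K : Set (En n), IsCompact K → ∫⁻ x in K, Γ x < ∞)
    (h : ∀ φ : En n → ℝ, ContDiff ℝ 1 φ → HasCompactSupport φ →
      ‖∫ x, u x * fderiv ℝ φ x e‖ₑ ≤ ∫⁻ x, ‖φ x‖ₑ * Γ x) :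
    ∃ g : En n → ℝ, Measurable g ∧ LocallyIntegrable g ∧ (∀ᵐ x, ‖g x‖ₑ ≤ Γ x) ∧
      ∀ φ : En n → ℝ, ContDiff ℝ 1 φ → HasCompactSupport φ →
        ∫ x, u x * fderiv ℝ φ x e = -∫ x, φ x * g x := by
  let T : testFunctions n →ₗ[ℝ] ℝ :=
    { toFun := fun φ => -∫ x, u x * fderiv ℝ (φ : En n → ℝ) x e
      map_add' := fun φ ψ => by
        rw [← neg_add, ← integral_add (integrable_continuous_mul_fderiv hu φ.2.1 φ.2.2 e)
          (integrable_continuous_mul_fderiv hu ψ.2.1 ψ.2.2 e)]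
        congr 2 with x
        rw [Submodule.coe_add, fderiv_add (φ.2.1.differentiable one_ne_zero x)
          (ψ.2.1.differentiable one_ne_zero x), add_apply, mul_add]
      map_smul' := fun c φ => by
        rw [RingHom.id_apply, smul_eq_mul, mul_neg, ← integral_const_mul]
        congr 2 with x
        rw [Submodule.coe_smul, fderiv_const_smul (φ.2.1.differentiable one_ne_zero x), smul_apply,
          smul_eq_mul, mul_left_comm] }
  obtain ⟨g, hgm, hg, hT⟩ := exists_density_of_enorm_le T hΓ hΓi fun φ => by
    simpa [T] using h φ φ.2.1 φ.2.2
  have hrep : ∀ φ : En n → ℝ, ContDiff ℝ 1 φ → HasCompactSupport φ →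
      ∫ x, u x * fderiv ℝ φ x e = -∫ x, φ x * g x := fun φ hφ hc =>
    neg_eq_iff_eq_neg.1 (hT ⟨φ, hφ, hc⟩)
  refine ⟨g, hgm, hg, ae_enorm_le_of_forall_contDiff hgm hg hΓ hΓi fun φ hφ hc => ?_, hrep⟩
  have := h φ hφ hc
  rwa [hrep φ hφ hc, enorm_neg] at this

lemma qcDensity_rpow_le (F : En n ≃ₜ En n) {p : ℝ} (hp : 0 ≤ p) (hn : 1 ≤ n) (x : En n) :
    qcDensity F x ^ p ≤ (imageVolume F).rnDeriv volume x ^ (p / n) *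
      (Kfine F x + 1) ^ (p * ((n : ℝ) - 1) / n) := by
  have hn0 : (1 : ℝ) ≤ n := by exact_mod_cast hn
  set W := Kfine F x + 1
  set J := (imageVolume F).rnDeriv volume x
  have h1 : W ^ p = W ^ (p * ((n : ℝ) - 1) / n) * W ^ (p / n) := by
    rw [← ENNReal.rpow_add_of_nonneg _ _
      (div_nonneg (mul_nonneg hp (by linarith)) (by linarith)) (by positivity)]
    congr 1
    field_simp
    ring
  calc qcDensity F x ^ p = W ^ p * (J * W⁻¹) ^ (p / n) := by
        rw [qcDensity, ENNReal.mul_rpow_of_nonneg _ _ hp, ← ENNReal.rpow_mul, div_eq_mul_inv J,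
          div_eq_inv_mul p]
    _ = J ^ (p / n) * W ^ (p * ((n : ℝ) - 1) / n) * (W * W⁻¹) ^ (p / n) := by
        rw [ENNReal.mul_rpow_of_nonneg _ _ (by positivity),
          ENNReal.mul_rpow_of_nonneg W _ (by positivity), h1]
        ring
    _ ≤ J ^ (p / n) * W ^ (p * ((n : ℝ) - 1) / n) * 1 := by
        gcongr
        exact ENNReal.rpow_le_one (ENNReal.mul_inv_le_one _) (by positivity)
    _ = _ := mul_one _

lemma setLIntegral_qcDensity_rpow_lt_top (hn : 2 ≤ n) {F : En n ≃ₜ En n} {p : ℝ} (hp : 1 ≤ p)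
    (hpn : p < n) (hmeas : Measurable fun x => Kfine F x) {C : Set (En n)} (hC : IsCompact C)
    (hK : ∫⁻ x in C, (Kfine F x + 1) ^ (p * ((n : ℝ) - 1) / ((n : ℝ) - p)) < ∞) :
    ∫⁻ x in C, qcDensity F x ^ p < ∞ := by
  have hn0 : (0 : ℝ) < n := by linarith
  have hnp : 0 < (n : ℝ) - p := by linarith
  have hp0 : 0 < p := by linarith
  have hconj : Real.HolderConjugate (n / p) (n / (n - p)) := by
    refine Real.holderConjugate_iff.2 ⟨(one_lt_div hp0).2 hpn, ?_⟩
    field_simp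
    ring
  have hJm := (imageVolume F).measurable_rnDeriv volume
  have hWm : Measurable fun x => Kfine F x + 1 := hmeas.add_const 1
  refine (lintegral_mono fun x => qcDensity_rpow_le F hp0.le (by omega) x).trans_lt ?_
  refine (ENNReal.lintegral_mul_le_Lp_mul_Lq _ hconj (hJm.pow_const _).aemeasurable
    (hWm.pow_const _).aemeasurable).trans_lt ?_
  have e1 : p / n * (n / p) = 1 := by field_simp
  have e2 : p * ((n : ℝ) - 1) / n * (n / (n - p)) = p * ((n : ℝ) - 1) / ((n : ℝ) - p) := by
    field_simp
  simp_rw [← ENNReal.rpow_mul, e1, e2, ENNReal.rpow_one]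
  refine ENNReal.mul_lt_top (ENNReal.rpow_lt_top_of_nonneg (by positivity) ?_)
    (ENNReal.rpow_lt_top_of_nonneg (by positivity) hK.ne)
  exact ((Measure.setLIntegral_rnDeriv_le C).trans_lt hC.measure_lt_top).ne

lemma hasWeakGradOn_of_partial {f : En n → En n} (hf : Continuous f)
    {G : Fin n → Fin n → En n → ℝ} (hG : ∀ i j, LocallyIntegrable (G i j))
    (h : ∀ i j (φ : En n → ℝ), ContDiff ℝ 1 φ → HasCompactSupport φ →
      ∫ x, f x i * fderiv ℝ φ x (EuclideanSpace.single j 1) = -∫ x, φ x * G i j x)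
    {g : En n → En n →L[ℝ] En n} (hg : ∀ x v i, g x v i = ∑ j, v j * G i j x) :
    HasWeakGradOn f g univ := by
  intro φ hφ hc _ v
  have hfi : ∀ i, Continuous fun x => f x i := fun i => by fun_prop
  have hφG : ∀ i j, Integrable fun x => φ x * G i j x := fun i j =>
    (hG i j).integrable_smul_left_of_hasCompactSupport hφ.continuous hc
  have hlin : ∀ x, fderiv ℝ φ x v = ∑ j, v j * fderiv ℝ φ x (EuclideanSpace.single j 1) := by
    intro x
    conv_lhs => rw [← (EuclideanSpace.basisFun (Fin n) ℝ).sum_repr v]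
    simp [map_sum]
  have hi1 : ∀ i, Integrable fun x => fderiv ℝ φ x v * f x i := fun i => by
    simpa only [mul_comm] using integrable_continuous_mul_fderiv (hfi i) hφ hc v
  have hi2 : ∀ i, Integrable fun x => φ x * g x v i := fun i => by
    simp_rw [hg, Finset.mul_sum, mul_left_comm (φ _)]
    exact integrable_finsetSum _ fun j _ => (hφG i j).const_mul _
  have key : ∀ i, ∫ x, fderiv ℝ φ x v * f x i = -∫ x, φ x * g x v i := by
    intro i
    simp_rw [hg, hlin, Finset.mul_sum, Finset.sum_mul, mul_left_comm (φ _)]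
    rw [integral_finsetSum _ fun j _ => (hφG i j).const_mul _, integral_finsetSum,
      ← Finset.sum_neg_distrib]
    · refine Finset.sum_congr rfl fun j _ => ?_
      simp_rw [mul_assoc, integral_const_mul, mul_comm _ (f _ i)]
      rw [h i j φ hφ hc, mul_neg]
    · intro j _
      simp_rw [mul_assoc, mul_comm _ (f _ i)]
      exact (integrable_continuous_mul_fderiv (hfi i) hφ hc _).const_mul _
  simp only [Measure.restrict_univ]
  have I1 : Integrable fun x => fderiv ℝ φ x v • f x := by
    refine Continuous.integrable_of_hasCompactSupport
      (((hφ.continuous_fderiv one_ne_zero).clm_apply continuous_const).smul hf) ?_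
    exact (hc.fderiv_apply (𝕜 := ℝ) v).smul_right
  have I2 : Integrable fun x => φ x • g x v := by
    have : Integrable fun x => (EuclideanSpace.equiv (Fin n) ℝ) (φ x • g x v) :=
      Integrable.of_eval fun i => by simpa using hi2 i
    simpa using (EuclideanSpace.equiv (Fin n) ℝ).symm.toContinuousLinearMap.integrable_comp this
  ext i
  have p1 := (EuclideanSpace.proj (𝕜 := ℝ) i : En n →L[ℝ] ℝ).integral_comp_comm I1
  have p2 := (EuclideanSpace.proj (𝕜 := ℝ) i : En n →L[ℝ] ℝ).integral_comp_comm I2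
  simp only [PiLp.proj_apply, PiLp.smul_apply, smul_eq_mul] at p1 p2
  rw [PiLp.neg_apply, ← p1, ← p2, key]

/-- The matrix unit sending `v` to `v j` times the `i`-th basis vector. -/
def matrixUnit (i j : Fin n) : En n →L[ℝ] En n :=
  (EuclideanSpace.proj (𝕜 := ℝ) j : En n →L[ℝ] ℝ).smulRight (EuclideanSpace.single i (1 : ℝ))

lemma matrixUnit_apply (i j k : Fin n) (v : En n) :
    matrixUnit i j v k = if k = i then v j else 0 := by
  simp [matrixUnit]

lemma enorm_matrixUnit_le (i j : Fin n) : ‖matrixUnit i j‖ₑ ≤ 1 := by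
  rw [← ofReal_norm, ← ENNReal.ofReal_one]
  refine ENNReal.ofReal_le_ofReal (ContinuousLinearMap.opNorm_le_bound _ zero_le_one fun v => ?_)
  simpa [matrixUnit, norm_smul] using PiLp.norm_apply_le v j

/-- The continuous linear map with matrix `a`. -/
def ofEntries (a : Fin n → Fin n → ℝ) : En n →L[ℝ] En n := ∑ i, ∑ j, a i j • matrixUnit i j

lemma ofEntries_apply (a : Fin n → Fin n → ℝ) (v : En n) (i : Fin n) :
    ofEntries a v i = ∑ j, v j * a i j := by
  simp only [ofEntries, sum_apply, smul_apply, PiLp.smul_apply, WithLp.ofLp_sum, Finset.sum_apply,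
    matrixUnit_apply, smul_eq_mul, mul_ite, mul_zero]
  rw [Finset.sum_comm]
  simp [mul_comm]

lemma enorm_sum_le_card_mul {V : Type*} [NormedAddCommGroup V] {v : Fin n → V} {c : ℝ≥0∞}
    (h : ∀ i, ‖v i‖ₑ ≤ c) : ‖∑ i, v i‖ₑ ≤ n * c :=
  (Finset.le_sum_of_subadditive (fun w : V => ‖w‖ₑ) (by simp) enorm_add_le Finset.univ v).trans
    ((Finset.sum_le_sum fun i _ => h i).trans_eq (by simp))

lemma enorm_ofEntries_le {a : Fin n → Fin n → ℝ} {c : ℝ≥0∞} (h : ∀ i j, ‖a i j‖ₑ ≤ c) :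
    ‖ofEntries a‖ₑ ≤ n * (n * c) := by
  refine enorm_sum_le_card_mul fun i => enorm_sum_le_card_mul fun j => ?_
  rw [enorm_smul]
  exact (mul_le_of_le_one_right' (enorm_matrixUnit_le i j)).trans (h i j)

lemma measurable_ofEntries {G : Fin n → Fin n → En n → ℝ} (hG : ∀ i j, Measurable (G i j)) :
    Measurable fun x => ofEntries fun i j => G i j x :=
  Finset.measurable_sum _ fun i _ => Finset.measurable_sum _ fun j _ => (hG i j).smul_const _

/-- A homeomorphism `f : ℝⁿ → ℝⁿ`, `1 ≤ p < n`, with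
`K^fine_f ∈ L^{p*(n-1)/n}_loc = L^{p(n-1)/(n-p)}_loc` and `K^fine_f < ∞` outside a set of
σ-finite `ℋ^{n-1}`-measure, belongs to `W^{1,p}_loc(ℝⁿ;ℝⁿ)`. -/
theorem finely_qc_sobolev_regularity (hn : 2 ≤ n) (f : En n → En n) (hf : IsHomeomorph f)
    (p : ℝ) (hp : 1 ≤ p) (hpn : p < n)
    (hmeas : Measurable fun x => Kfine f x)
    (hloc : ∀ C : Set (En n), IsCompact C →
      ∫⁻ x in C, Kfine f x ^ (p * ((n : ℝ) - 1) / ((n : ℝ) - p)) < ∞)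
    (E : Set (En n)) (hE : ∀ x ∉ E, Kfine f x < ∞)
    (hsig : ∃ Es : ℕ → Set (En n), E ⊆ ⋃ j, Es j ∧ ∀ j, μH[(n : ℝ) - 1] (Es j) < ∞) :
    ∃ g : En n → (En n →L[ℝ] En n),
      HasWeakGradOn f g univ ∧
      LocallyIntegrable f ∧
      LocallyIntegrable (fun x => ‖g x‖ ^ p) := by
  obtain ⟨F, rfl⟩ : ∃ F : En n ≃ₜ En n, f = F := ⟨hf.homeomorph f, rfl⟩
  have hnp : 0 < (n : ℝ) - p := by linarith
  have hn2 : (2 : ℝ) ≤ n := by exact_mod_cast hn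
  set q : ℝ := p * ((n : ℝ) - 1) / ((n : ℝ) - p) with hq_def
  have hq : 1 ≤ q := by
    rw [hq_def, le_div_iff₀ hnp]
    nlinarith
  have hle_rpow : ∀ {a : ℝ≥0∞} {r : ℝ}, 1 ≤ a → 1 ≤ r → a ≤ a ^ r := fun h1 hr => by
    simpa using ENNReal.rpow_le_rpow_of_exponent_le h1 hr
  have hW : ∀ C : Set (En n), IsCompact C → ∫⁻ x in C, (Kfine F x + 1) ^ q < ∞ := by
    intro C hC
    refine (lintegral_mono fun x => ENNReal.rpow_add_le_mul_rpow_add_rpow _ _ hq).trans_lt ?_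
    rw [lintegral_const_mul _ ((hmeas.pow_const q).add_const _),
      lintegral_add_right _ measurable_const, setLIntegral_const]
    refine ENNReal.mul_lt_top (ENNReal.rpow_lt_top_of_nonneg (by linarith) (by simp))
      (ENNReal.add_lt_top.2 ⟨hloc C hC, ENNReal.mul_lt_top (by simp) hC.measure_lt_top⟩)
  have hKint : ∀ k : ℕ, ∫⁻ x in closedBall (0 : En n) k, (Kfine F x + 1) < ∞ := fun k =>
    (lintegral_mono fun x => hle_rpow le_add_self hq).trans_lt (hW _ (isCompact_closedBall 0 _))
  have hGm : Measurable (qcDensity F) := measurable_qcDensity hmeas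
  have hGp : ∀ C : Set (En n), IsCompact C → ∫⁻ x in C, qcDensity F x ^ p < ∞ := fun C hC =>
    setLIntegral_qcDensity_rpow_lt_top hn hp hpn hmeas hC (hW C hC)
  have hGi : ∀ C : Set (En n), IsCompact C → ∫⁻ x in C, qcDensity F x < ∞ := by
    intro C hC
    have hb : ∀ x, qcDensity F x ≤ qcDensity F x ^ p + 1 := fun x => by
      rcases le_total 1 (qcDensity F x) with h | h
      · exact (hle_rpow h hp).trans le_self_add
      · exact h.trans le_add_self
    refine (lintegral_mono hb).trans_lt ?_
    rw [lintegral_add_right _ measurable_const, setLIntegral_const]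
    exact ENNReal.add_lt_top.2 ⟨hGp C hC, ENNReal.mul_lt_top (by simp) hC.measure_lt_top⟩
  have hΓm : Measurable fun x => qcConst n * qcDensity F x := hGm.const_mul _
  have hderiv : ∀ i j : Fin n, ∃ g : En n → ℝ, Measurable g ∧ LocallyIntegrable g ∧
      (∀ᵐ x, ‖g x‖ₑ ≤ qcConst n * qcDensity F x) ∧
      ∀ φ : En n → ℝ, ContDiff ℝ 1 φ → HasCompactSupport φ →
        ∫ x, F x i * fderiv ℝ φ x (EuclideanSpace.single j 1) = -∫ x, φ x * g x := by
    intro i j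
    have he : ‖(EuclideanSpace.single j 1 : En n)‖ = 1 := by simp
    have hu : Continuous fun x => F x i := by fun_prop
    refine exists_weak_directional_derivative hu _ hΓm (fun C hC => ?_) fun φ hφ hc => ?_
    · rw [lintegral_const_mul _ hGm]
      exact ENNReal.mul_lt_top qcConst_ne_top.lt_top (hGi C hC)
    · refine (enorm_integral_mul_fderiv_le hu hGm hGi qcConst_ne_top he (fun s hs A hA =>
        sweepMeasure_le_lintegral_qcDensity hn F hmeas hKint hE hsig i he hs hA) hφ hc).trans_eq ?_
      simp_rw [mul_left_comm _ (qcConst n)]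
      rw [lintegral_const_mul _
        (f := fun x => ‖φ x‖ₑ * qcDensity F x) (hφ.continuous.measurable.enorm.mul hGm)]
  choose G hGijm hGij hGle hGrep using hderiv
  set g : En n → En n →L[ℝ] En n := fun x => ofEntries fun i j => G i j x
  have hgm : Measurable fun x => ‖g x‖ := (measurable_ofEntries hGijm).norm
  have hgle : ∀ᵐ x, ‖g x‖ₑ ≤ n * (n * qcConst n) * qcDensity F x := by
    filter_upwards [ae_all_iff.2 fun i => ae_all_iff.2 fun j => hGle i j] with x hx
    exact (enorm_ofEntries_le hx).trans_eq (by simp only [mul_assoc])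
  refine ⟨g, hasWeakGradOn_of_partial F.continuous hGij hGrep
    fun x v i => ofEntries_apply _ v i,
    F.continuous.locallyIntegrable, locallyIntegrable_iff.2 fun C hC => ?_⟩
  refine ⟨(hgm.pow_const p).aestronglyMeasurable, ?_⟩
  have hp0 : 0 ≤ p := by linarith
  have hb : ∀ᵐ x ∂volume.restrict C, ‖‖g x‖ ^ p‖ₑ ≤
      (n * (n * qcConst n)) ^ p * qcDensity F x ^ p := by
    filter_upwards [ae_restrict_of_ae hgle] with x hx
    rw [Real.enorm_rpow_of_nonneg (norm_nonneg _) hp0, enorm_norm,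
      ← ENNReal.mul_rpow_of_nonneg _ _ hp0]
    exact ENNReal.rpow_le_rpow hx hp0
  refine (lintegral_mono_ae hb).trans_lt ?_
  rw [lintegral_const_mul _ (hGm.pow_const p)]
  exact ENNReal.mul_lt_top (ENNReal.rpow_lt_top_of_nonneg hp0 (ENNReal.mul_ne_top (by simp)
    (ENNReal.mul_ne_top (by simp) qcConst_ne_top))) (hGp C hC)


end
end

section
/- Suppose N ⊂ ℝ^n is a Borel set such that liminf_{r→0} cap₁(N ∩ B(x,r))/r^{n-1} < ω_{n-1}/(2√2)^{n-1} for every x ∈ N. Then N is purely ℋ^{n-1}-unrectifiable, i.e., ℋ^{n-1}(N ∩ S) = 0 for every countably ℋ^{n-1}-rectifiable set S ⊂ ℝ^n. -/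
open MeasureTheory Metric Set Filter ENNReal NNReal Topology

noncomputable section

variable {n : ℕ}

lemma hausdorffMeasure_image_le_of_dist_le {X Y Z : Type*} [MetricSpace Y] [MeasurableSpace Y]
    [BorelSpace Y] [MetricSpace Z] [MeasurableSpace Z] [BorelSpace Z] {f : X → Y} {g : X → Z}
    {s : Set X} {K : ℝ≥0} (hK : ∀ x ∈ s, ∀ y ∈ s, dist (f x) (f y) ≤ K * dist (g x) (g y))
    {d : ℝ} (hd : 0 ≤ d) : μH[d] (f '' s) ≤ (K : ℝ≥0∞) ^ d * μH[d] (g '' s) := by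
  rcases s.eq_empty_or_nonempty with rfl | ⟨x₀, hx₀⟩
  · simp
  have : Nonempty X := ⟨x₀⟩
  have hinv : ∀ x ∈ s, Function.invFunOn g s (g x) ∈ s ∧ g (Function.invFunOn g s (g x)) = g x :=
    fun x hx => ⟨Function.invFunOn_mem ⟨x, hx, rfl⟩, Function.invFunOn_eq ⟨x, hx, rfl⟩⟩
  have hfac : f '' s = (fun z => f (Function.invFunOn g s z)) '' (g '' s) := by
    rw [image_image]
    refine image_congr fun x hx => ?_
    have := hK x hx _ (hinv x hx).1
    rw [(hinv x hx).2, dist_self, mul_zero] at this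
    exact dist_le_zero.1 this
  rw [hfac]
  refine LipschitzOnWith.hausdorffMeasure_image_le (LipschitzOnWith.of_dist_le_mul ?_) hd
  rintro _ ⟨x, hx, rfl⟩ _ ⟨y, hy, rfl⟩
  have := hK _ (hinv x hx).1 _ (hinv y hy).1
  rwa [(hinv x hx).2, (hinv y hy).2] at this

/-- A fixed bump function on the line, with values at most `1`. -/
def lineBump : ContDiffBump (0 : ℝ) := ⟨1, 2, one_pos, one_lt_two⟩

lemma lineBump_normed_le_one (t : ℝ) : lineBump.normed volume t ≤ 1 := by
  refine (lineBump.normed_le_div_measure_closedBall_rIn volume t).trans ?_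
  simp [lineBump, measureReal_def]
  norm_num

/-- A compactly supported profile on the line whose derivative is the fixed bump function minus
a nonnegative bump of mass one concentrated in a prescribed interval. -/
lemma exists_profile (c δ : ℝ) (hδ : 0 < δ) :
    ∃ ψ β : ℝ → ℝ, ContDiff ℝ 1 ψ ∧ HasCompactSupport ψ ∧ (∀ t, |ψ t| ≤ 1) ∧
      (∀ t, HasDerivAt ψ (lineBump.normed volume t - β t) t) ∧ Continuous β ∧ (∀ t, 0 ≤ β t) ∧
      HasCompactSupport β ∧ ∫ t, β t = 1 ∧ ∀ t, t ∉ ball c δ → β t = 0 := by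
  let B : ContDiffBump c := ⟨δ / 2, δ, by positivity, by linarith⟩
  set α := lineBump.normed volume with hα
  set β := B.normed volume with hβ
  have hαi : Integrable α := lineBump.integrable_normed
  have hβi : Integrable β := B.integrable_normed
  have hαc : Continuous α := lineBump.continuous_normed
  have hβc : Continuous β := B.continuous_normed
  have hα0 : ∀ t, 0 ≤ α t := fun t => lineBump.nonneg_normed t
  have hβ0 : ∀ t, 0 ≤ β t := fun t => B.nonneg_normed t
  have hα1 : ∫ t, α t = 1 := lineBump.integral_normed
  have hβ1 : ∫ t, β t = 1 := B.integral_normed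
  have hd : ∀ t, HasDerivAt (fun t => ∫ s in Iic t, (α s - β s)) (α t - β t) t := by
    intro t
    have e : (fun t => ∫ s in Iic t, (α s - β s)) =
        fun t => (∫ s in Iic 0, (α s - β s)) + ∫ s in (0 : ℝ)..t, (α s - β s) := by
      funext t
      have := intervalIntegral.integral_Iic_sub_Iic (a := 0) (b := t)
        (hαi.sub hβi).integrableOn (hαi.sub hβi).integrableOn
      simp only [Pi.sub_apply] at this
      linarith
    rw [e]
    exact ((hαc.sub hβc).integral_hasStrictDerivAt 0 t).hasDerivAt.const_add _
  obtain ⟨M, hM⟩ : ∃ M : ℝ, ∀ s, M < |s| → α s - β s = 0 := by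
    have : HasCompactSupport (fun s => α s - β s) :=
      lineBump.hasCompactSupport_normed.sub B.hasCompactSupport_normed
    obtain ⟨M, hM⟩ := this.isCompact.isBounded.subset_closedBall 0
    refine ⟨M, fun s hs => ?_⟩
    by_contra hne
    have := hM (subset_tsupport _ hne)
    rw [mem_closedBall_zero_iff, Real.norm_eq_abs] at this
    linarith
  refine ⟨fun t => ∫ s in Iic t, (α s - β s), β, ?_, ?_, ?_, hd, hβc, hβ0,
    B.hasCompactSupport_normed, hβ1, ?_⟩
  · rw [contDiff_one_iff_deriv]
    refine ⟨fun t => (hd t).differentiableAt, ?_⟩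
    rw [show deriv (fun t => ∫ s in Iic t, (α s - β s)) = fun t => α t - β t from
      funext fun t => (hd t).deriv]
    exact hαc.sub hβc
  · refine HasCompactSupport.intro (isCompact_closedBall (0 : ℝ) (|M|)) fun t ht => ?_
    rw [mem_closedBall_zero_iff, Real.norm_eq_abs, not_le] at ht
    rcases le_total 0 t with h0 | h0
    · rw [abs_of_nonneg h0] at ht
      rw [setIntegral_eq_integral_of_forall_compl_eq_zero, integral_sub hαi hβi, hα1, hβ1, sub_self]
      intro s hs
      simp only [mem_Iic, not_le] at hs
      exact hM s (by rw [abs_of_pos (by linarith)]; linarith [le_abs_self M])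
    · rw [abs_of_nonpos h0] at ht
      refine setIntegral_eq_zero_of_forall_eq_zero fun s hs => hM s ?_
      simp only [mem_Iic] at hs
      rw [abs_of_nonpos (by linarith)]
      linarith [le_abs_self M]
  · intro t
    simp only
    rw [integral_sub hαi.integrableOn hβi.integrableOn, abs_le]
    have h1 : ∫ s in Iic t, α s ≤ 1 := hα1 ▸ setIntegral_le_integral hαi (ae_of_all _ hα0)
    have h2 : ∫ s in Iic t, β s ≤ 1 := hβ1 ▸ setIntegral_le_integral hβi (ae_of_all _ hβ0)
    have h3 : 0 ≤ ∫ s in Iic t, α s := integral_nonneg hα0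
    have h4 : 0 ≤ ∫ s in Iic t, β s := integral_nonneg hβ0
    constructor <;> linarith
  · intro t ht
    by_contra hne
    have : t ∈ Function.support (B.normed volume) := hne
    rw [B.support_normed_eq] at this
    exact ht this

/-- A finite smooth partition of unity on a compact set, with compactly supported members. -/
lemma exists_finite_partition {W : Type*} [NormedAddCommGroup W] [NormedSpace ℝ W]
    [FiniteDimensional ℝ W] {ι : Type*} [Fintype ι] {K : Set W} (hK : IsCompact K)
    (U : ι → Set W) (hUo : ∀ i, IsOpen (U i)) (hUb : ∀ i, Bornology.IsBounded (U i))
    (hKU : K ⊆ ⋃ i, U i) :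
    ∃ χ : ι → W → ℝ, (∀ i, ContDiff ℝ 1 (χ i)) ∧ (∀ i, HasCompactSupport (χ i)) ∧
      (∀ i y, 0 ≤ χ i y) ∧ (∀ i y, y ∉ U i → χ i y = 0) ∧ (∀ y, ∑ i, χ i y ≤ 1) ∧
      ∀ y ∈ K, ∑ i, χ i y = 1 := by
  obtain ⟨f, hf⟩ := SmoothPartitionOfUnity.exists_isSubordinate (modelWithCornersSelf ℝ W)
    hK.isClosed U hUo hKU
  refine ⟨fun i => f i, fun i => ?_, fun i => ?_, fun i y => f.nonneg i y, fun i y hy => ?_,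
    fun y => ?_, fun y hy => ?_⟩
  · exact (contMDiff_iff_contDiff.1 (f i).contMDiff).of_le (by exact_mod_cast le_top)
  · exact Metric.isCompact_of_isClosed_isBounded (isClosed_tsupport _) ((hUb i).subset (hf i))
  · by_contra hne
    exact hy (hf i (subset_tsupport _ hne))
  · rw [← finsum_eq_sum_of_fintype]; exact f.sum_le_one y
  · rw [← finsum_eq_sum_of_fintype]; exact f.sum_eq_one hy

lemma fderiv_sum_mul_apply {m : ℕ} (Φ : En n ≃ₗᵢ[ℝ] WithLp 2 (En m × ℝ)) {ι : Type*} [Fintype ι]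
    {χ : ι → En m → ℝ} {ψ ψ' : ι → ℝ → ℝ} (hψ : ∀ i t, HasDerivAt (ψ i) (ψ' i t) t) {x : En n}
    (hφ : DifferentiableAt ℝ (fun x => ∑ i, χ i (Φ x).fst * ψ i (Φ x).snd) x) :
    fderiv ℝ (fun x => ∑ i, χ i (Φ x).fst * ψ i (Φ x).snd) x (Φ.symm (WithLp.toLp 2 (0, 1))) =
      ∑ i, χ i (Φ x).fst * ψ' i (Φ x).snd := by
  rw [← hφ.lineDeriv_eq_fderiv, lineDeriv]
  have e : (fun s : ℝ => ∑ i, χ i (Φ (x + s • Φ.symm (WithLp.toLp 2 (0, 1)))).fst *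
      ψ i (Φ (x + s • Φ.symm (WithLp.toLp 2 (0, 1)))).snd) =
      fun s : ℝ => ∑ i, χ i (Φ x).fst * ψ i ((Φ x).snd + s) := by
    funext s
    simp
  rw [e]
  refine HasDerivAt.deriv (HasDerivAt.fun_sum fun i _ => ?_)
  have := HasDerivAt.comp_const_add (Φ x).snd 0 (hψ i ((Φ x).snd + 0))
  simpa using this.const_mul (χ i (Φ x).fst)

lemma measurePreserving_coordinates {m : ℕ} (Φ : En n ≃ₗᵢ[ℝ] WithLp 2 (En m × ℝ)) :
    MeasurePreserving (fun x => WithLp.ofLp (Φ x)) volume (volume.prod volume) :=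
  (WithLp.volume_preserving_ofLp (En m) ℝ).comp Φ.measurePreserving

lemma integral_mul_coordinates {m : ℕ} (Φ : En n ≃ₗᵢ[ℝ] WithLp 2 (En m × ℝ))
    {χ : En m → ℝ} {β : ℝ → ℝ} (hχ : Integrable χ) (hβ : Integrable β) :
    Integrable (fun x => χ (Φ x).fst * β (Φ x).snd) ∧
      ∫ x, χ (Φ x).fst * β (Φ x).snd = (∫ y, χ y) * ∫ t, β t := by
  have hm := measurePreserving_coordinates Φ
  have he : MeasurableEmbedding (fun x => WithLp.ofLp (Φ x)) :=
    (Φ.toHomeomorph.trans (WithLp.homeomorphProd 2 (En m) ℝ)).measurableEmbedding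
  constructor
  · exact (hm.integrable_comp_emb he (g := fun p : En m × ℝ => χ p.1 * β p.2)).2 (hχ.mul_prod hβ)
  · rw [← integral_prod_mul]
    exact hm.integral_comp he (fun p : En m × ℝ => χ p.1 * β p.2)

lemma measure_compact_le_sobolev_norm {m : ℕ} (Φ : En n ≃ₗᵢ[ℝ] WithLp 2 (En m × ℝ))
    {u : En n → ℝ} {g : En n → (En n →L[ℝ] ℝ)} (hu : Integrable u)
    (hg : Integrable (fun x => ‖g x‖)) (hug : IsWeakGrad u g) {V : Set (En n)} (hV : IsOpen V)
    (huV : ∀ x ∈ V, 1 ≤ u x) {K : Set (En m)} (hK : IsCompact K)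
    (hKV : K ⊆ (fun x => (Φ x).fst) '' V) :
    volume.real K ≤ (∫ x, |u x|) + ∫ x, ‖g x‖ := by
  have hloc : ∀ y ∈ K, ∃ c δ : ℝ, 0 < δ ∧
      ∀ x, (Φ x).fst ∈ ball y δ → (Φ x).snd ∈ ball c δ → x ∈ V := by
    intro y hy
    obtain ⟨x₀, hx₀, rfl⟩ := hKV hy
    have hcont : Continuous (fun p : En m × ℝ => Φ.symm (WithLp.toLp 2 p)) :=
      Φ.symm.continuous.comp (WithLp.prod_continuous_toLp 2 (En m) ℝ)
    obtain ⟨δ, hδ, hb⟩ := Metric.isOpen_iff.1 (hV.preimage hcont) (WithLp.ofLp (Φ x₀))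
      (by simpa using hx₀)
    refine ⟨(Φ x₀).snd, δ, hδ, fun x h1 h2 => ?_⟩
    have : WithLp.ofLp (Φ x) ∈ ball (WithLp.ofLp (Φ x₀)) δ := by
      rw [mem_ball, Prod.dist_eq]
      exact max_lt h1 h2
    simpa using hb this
  choose! c δ hδ hbox using hloc
  obtain ⟨F, hF⟩ := hK.elim_nhds_subcover' (fun y _ => ball y (δ y))
    (fun y hy => ball_mem_nhds y (hδ y hy))
  have hcover : K ⊆ ⋃ i : F, ball (i.1.1 : En m) (δ i.1.1) := by
    intro y hy
    obtain ⟨i, hi, hyi⟩ := mem_iUnion₂.1 (hF hy)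
    exact mem_iUnion.2 ⟨⟨i, hi⟩, hyi⟩
  obtain ⟨χ, hχd, hχc, hχ0, hχs, hχ1, hχK⟩ := exists_finite_partition hK
    (fun i : F => ball (i.1.1 : En m) (δ i.1.1)) (fun _ => isOpen_ball) (fun _ => isBounded_ball)
    hcover
  choose ψ β hψd hψc hψ1 hψ' hβc hβ0 hβs hβ1 hβb using
    fun i : F => exists_profile (c i.1.1) (δ i.1.1) (hδ _ i.1.2)
  set α := lineBump.normed volume
  set v : En n := Φ.symm (WithLp.toLp 2 (0, 1)) with hv
  have hv1 : ‖v‖ = 1 := by simp [hv]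
  set φ : En n → ℝ := fun x => ∑ i, χ i (Φ x).fst * ψ i (Φ x).snd with hφ
  have hfst : ContDiff ℝ 1 (fun x => (Φ x).fst) :=
    ((WithLp.fstL 2 ℝ (En m) ℝ).comp (Φ.toContinuousLinearEquiv : En n →L[ℝ] _)).contDiff
  have hsnd : ContDiff ℝ 1 (fun x => (Φ x).snd) :=
    ((WithLp.sndL 2 ℝ (En m) ℝ).comp (Φ.toContinuousLinearEquiv : En n →L[ℝ] _)).contDiff
  have hφd : ContDiff ℝ 1 φ :=
    ContDiff.sum fun i _ => ((hχd i).comp hfst).mul ((hψd i).comp hsnd)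
  have hφc : HasCompactSupport φ := by
    refine HasCompactSupport.intro (K := ⋃ i, (fun p : En m × ℝ => Φ.symm (WithLp.toLp 2 p)) ''
      (tsupport (χ i) ×ˢ tsupport (ψ i))) ?_ fun x hx => ?_
    · exact isCompact_iUnion fun i => ((hχc i).isCompact.prod (hψc i).isCompact).image
        (Φ.symm.continuous.comp (WithLp.prod_continuous_toLp 2 (En m) ℝ))
    · refine Finset.sum_eq_zero fun i _ => ?_
      by_contra hne
      refine hx (mem_iUnion.2 ⟨i, WithLp.ofLp (Φ x), ⟨?_, ?_⟩, by simp⟩)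
      · exact subset_tsupport _ (left_ne_zero_of_mul hne)
      · exact subset_tsupport _ (right_ne_zero_of_mul hne)
  have hφ1 : ∀ x, |φ x| ≤ 1 := fun x => calc
    |φ x| ≤ ∑ i, |χ i (Φ x).fst * ψ i (Φ x).snd| := Finset.abs_sum_le_sum_abs _ _
    _ ≤ ∑ i, χ i (Φ x).fst := by
      refine Finset.sum_le_sum fun i _ => ?_
      rw [abs_mul, abs_of_nonneg (hχ0 i _)]
      exact mul_le_of_le_one_right (hχ0 i _) (hψ1 i _)
    _ ≤ 1 := hχ1 _
  have hder : ∀ x, fderiv ℝ φ x v = ∑ i, χ i (Φ x).fst * (α (Φ x).snd - β i (Φ x).snd) := fun x =>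
    fderiv_sum_mul_apply Φ hψ' (hφd.differentiable one_ne_zero x)
  have hχi : ∀ i, Integrable (χ i) := fun i =>
    (hχd i).continuous.integrable_of_hasCompactSupport (hχc i)
  have hβi : ∀ i, Integrable (β i) := fun i => (hβc i).integrable_of_hasCompactSupport (hβs i)
  have hprod := fun i => integral_mul_coordinates Φ (hχi i) (hβi i)
  have hweak := hug φ hφd hφc v
  have hright : ∫ x, φ x * g x v ≤ ∫ x, ‖g x‖ := by
    refine (Real.le_norm_self _).trans (norm_integral_le_of_norm_le hg (ae_of_all _ fun x => ?_))
    rw [norm_mul, Real.norm_eq_abs]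
    calc |φ x| * ‖g x v‖ ≤ 1 * (‖g x‖ * ‖v‖) := by
          gcongr
          · exact hφ1 x
          · exact (g x).le_opNorm v
      _ = ‖g x‖ := by rw [hv1, mul_one, one_mul]
  have hui : Integrable (fun x => u x * fderiv ℝ φ x v) := by
    have hc : Continuous (fun x => fderiv ℝ φ x v) :=
      (hφd.continuous_fderiv one_ne_zero).clm_apply continuous_const
    obtain ⟨C, hC⟩ := hc.bounded_above_of_compact_support (hφc.fderiv_apply (𝕜 := ℝ) v)
    exact hu.mul_bdd hc.aestronglyMeasurable (ae_of_all _ hC)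
  have hpt : ∀ x, (∑ i, χ i (Φ x).fst * β i (Φ x).snd) - |u x| ≤ -(u x * fderiv ℝ φ x v) := by
    intro x
    have h1 : (∑ i, χ i (Φ x).fst * β i (Φ x).snd) ≤
        u x * ∑ i, χ i (Φ x).fst * β i (Φ x).snd := by
      rw [Finset.mul_sum]
      refine Finset.sum_le_sum fun i _ => ?_
      by_cases hx : (Φ x).fst ∈ ball i.1.1 (δ i.1.1) ∧ (Φ x).snd ∈ ball (c i.1.1) (δ i.1.1)
      · exact le_mul_of_one_le_left (mul_nonneg (hχ0 i _) (hβ0 i _))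
          (huV x (hbox _ i.1.2 x hx.1 hx.2))
      · rcases not_and_or.1 hx with hx | hx
        · simp [hχs i _ hx]
        · simp [hβb i _ hx]
    have h2 : u x * (α (Φ x).snd * ∑ i, χ i (Φ x).fst) ≤ |u x| := by
      refine (le_abs_self _).trans ?_
      rw [abs_mul]
      refine mul_le_of_le_one_right (abs_nonneg _) ?_
      have h0 : 0 ≤ ∑ i, χ i (Φ x).fst := Finset.sum_nonneg fun i _ => hχ0 i _
      have h3 : 0 ≤ α (Φ x).snd := lineBump.nonneg_normed _
      rw [abs_of_nonneg (mul_nonneg h3 h0)]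
      exact mul_le_one₀ (lineBump_normed_le_one _) h0 (hχ1 _)
    have h3 : fderiv ℝ φ x v = α (Φ x).snd * (∑ i, χ i (Φ x).fst) -
        ∑ i, χ i (Φ x).fst * β i (Φ x).snd := by
      rw [hder, Finset.mul_sum, ← Finset.sum_sub_distrib]
      exact Finset.sum_congr rfl fun i _ => by ring
    rw [h3]
    linarith
  have hsum : Integrable (fun x => ∑ i, χ i (Φ x).fst * β i (Φ x).snd) :=
    integrable_finsetSum _ fun i _ => (hprod i).1
  have hint := integral_mono (hsum.sub hu.abs) hui.neg hpt
  have hKle : volume.real K ≤ ∑ i, ∫ y, χ i y := by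
    rw [← integral_finsetSum _ fun i _ => hχi i, ← integral_indicator_one hK.measurableSet]
    refine integral_mono ((integrable_indicator_iff hK.measurableSet).2
      (integrableOn_const hK.measure_lt_top.ne)) (integrable_finsetSum _ fun i _ => hχi i)
      fun y => ?_
    by_cases hy : y ∈ K
    · simpa [hy] using (hχK y hy).ge
    · simpa [hy] using Finset.sum_nonneg fun i _ => hχ0 i y
  simp only [Pi.sub_apply, Pi.neg_apply] at hint
  rw [integral_sub hsum hu.abs, integral_finsetSum _ fun i _ => (hprod i).1, integral_neg,
    hweak, neg_neg] at hint
  simp only [fun i => (hprod i).2, hβ1, mul_one] at hint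
  linarith

/-- The capacity of a set dominates the measure of its projection to a hyperplane. -/
lemma measure_projection_le_cap1 {m : ℕ} (Φ : En n ≃ₗᵢ[ℝ] WithLp 2 (En m × ℝ)) (A : Set (En n)) :
    volume ((fun x => (Φ x).fst) '' A) ≤ cap1 A := by
  refine le_sInf ?_
  rintro _ ⟨u, g, hu, hg, hug, ⟨V, hV, hAV, huV⟩, rfl⟩
  refine (measure_mono (image_mono hAV)).trans ?_
  have hopen : IsOpen ((fun x => (Φ x).fst) '' V) := by
    have : IsOpenMap (Prod.fst ∘ (Φ.toHomeomorph.trans (WithLp.homeomorphProd 2 (En m) ℝ))) :=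
      isOpenMap_fst.comp (Homeomorph.isOpenMap _)
    exact this V hV
  rw [hopen.measure_eq_iSup_isCompact]
  refine iSup₂_le fun K hKV => iSup_le fun hK => ?_
  rw [← ofReal_measureReal hK.measure_lt_top.ne]
  exact ENNReal.ofReal_le_ofReal (measure_compact_le_sobolev_norm Φ hu hg hug hV huV hK hKV)

/-- A non-injective linear map is dominated by a coercive endomorphism of small determinant. -/
lemma exists_dominating_of_not_injective {m k : ℕ} (A : En m →L[ℝ] En k)
    (hA : ¬ Function.Injective A) {η : ℝ} (hη : 0 < η) :
    ∃ (δ : ℝ) (B : En m →L[ℝ] En m), 0 < δ ∧ (∀ z, ‖A z‖ ≤ ‖B z‖) ∧ (∀ z, δ * ‖z‖ ≤ ‖B z‖) ∧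
      |B.det| ≤ η := by
  obtain ⟨e, he, he1⟩ : ∃ e, A e = 0 ∧ ‖e‖ = 1 := by
    rw [injective_iff_map_eq_zero] at hA
    push Not at hA
    obtain ⟨e, he, hne⟩ := hA
    exact ⟨‖e‖⁻¹ • e, by simp [he], by simp [norm_smul, hne]⟩
  set M : ℝ := ‖A‖ + 1 with hM
  have hM0 : 0 < M := by positivity
  let B : ℝ → En m →L[ℝ] En m := fun δ =>
    M • ContinuousLinearMap.id ℝ (En m) + (δ - M) • (innerSL ℝ e).smulRight e
  have hB : ∀ δ z, B δ z = M • z + (δ - M) • (inner ℝ e z • e) := fun δ z => by simp [B]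
  have hBcont : Continuous fun δ => |(B δ).det| := by
    refine (ContinuousLinearMap.continuous_det.comp ?_).abs
    fun_prop
  have hB0 : (B 0).det = 0 := by
    refine LinearMap.det_eq_zero_iff_ker_ne_bot.2 fun hker => ?_
    have : e ∈ LinearMap.ker (B 0 : En m →ₗ[ℝ] En m) := by
      rw [LinearMap.mem_ker, ContinuousLinearMap.coe_coe, hB, real_inner_self_eq_norm_sq, he1]
      simp
    rw [hker, Submodule.mem_bot] at this
    simp [this] at he1
  have hsmall : ∀ᶠ δ in 𝓝[>] (0 : ℝ), |(B δ).det| < η := by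
    refine (hBcont.tendsto 0).eventually_lt_const ?_ |>.filter_mono nhdsWithin_le_nhds
    simpa [hB0] using hη
  obtain ⟨δ, ⟨hδη, hδM⟩, hδ⟩ := ((hsmall.and (eventually_lt_nhds hM0 |>.filter_mono
    nhdsWithin_le_nhds)).and self_mem_nhdsWithin).exists
  have hδ0 : 0 < δ := hδ
  have hdecomp : ∀ z, ‖z - inner ℝ e z • e‖ ^ 2 = ‖z‖ ^ 2 - (inner ℝ e z) ^ 2 := fun z => by
    rw [norm_sub_sq_real, inner_smul_right, norm_smul, he1, real_inner_comm, mul_one,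
      Real.norm_eq_abs, sq_abs]
    ring
  have hBsq : ∀ z, ‖B δ z‖ ^ 2 = M ^ 2 * ‖z - inner ℝ e z • e‖ ^ 2 + δ ^ 2 * (inner ℝ e z) ^ 2 := by
    intro z
    rw [hdecomp, hB, norm_add_sq_real, inner_smul_left, inner_smul_right, inner_smul_right,
      norm_smul, norm_smul, norm_smul, he1, real_inner_comm, mul_pow, mul_pow, mul_pow,
      Real.norm_eq_abs, Real.norm_eq_abs, Real.norm_eq_abs, sq_abs, sq_abs, sq_abs]
    simp only [conj_trivial]
    ring
  refine ⟨δ, B δ, hδ0, fun z => ?_, fun z => ?_, hδη.le⟩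
  · refine abs_le_of_sq_le_sq' ?_ (norm_nonneg _) |>.2
    have h1 : A z = A (z - inner ℝ e z • e) := by simp [he]
    have h2 : ‖A z‖ ≤ M * ‖z - inner ℝ e z • e‖ := by
      rw [h1]
      refine (A.le_opNorm _).trans ?_
      gcongr
      linarith
    have h3 := pow_le_pow_left₀ (norm_nonneg _) h2 2
    rw [mul_pow] at h3
    rw [hBsq]
    nlinarith [mul_nonneg (sq_nonneg δ) (sq_nonneg (inner ℝ e z))]
  · refine abs_le_of_sq_le_sq' ?_ (norm_nonneg _) |>.2
    have h1 : δ ^ 2 ≤ M ^ 2 := pow_le_pow_left₀ hδ0.le hδM.le 2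
    have h2 := hdecomp z
    have h3 := sq_nonneg ‖z - inner ℝ e z • e‖
    rw [hBsq, mul_pow]
    nlinarith [mul_le_mul_of_nonneg_right h1 h3]

/-- The image of the set of points where the derivative is not injective is negligible. -/
lemma hausdorffMeasure_image_eq_zero_of_not_injective {m k : ℕ} (F : En m → En k) (s : Set (En m))
    (hs : ∀ x ∈ s, DifferentiableAt ℝ F x) (hs' : ∀ x ∈ s, ¬ Function.Injective (fderiv ℝ F x)) :
    μH[(m : ℝ)] (F '' s) = 0 := by
  have hbdd : ∀ R : ℕ, μH[(m : ℝ)] (F '' (s ∩ ball 0 R)) = 0 := by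
    intro R
    set C : ℝ≥0∞ := (2 : ℝ≥0) ^ (m : ℝ) * μH[(m : ℝ)] (ball (0 : En m) R) with hC
    have hCfin : C ≠ ∞ :=
      ENNReal.mul_ne_top (ENNReal.rpow_ne_top_of_nonneg (by positivity) (by simp))
        measure_ball_lt_top.ne
    have hη : ∀ η : ℝ≥0, 0 < η → μH[(m : ℝ)] (F '' (s ∩ ball 0 R)) ≤ C * η := by
      intro η hη
      have key : ∀ A : En m →L[ℝ] En k, ∃ (δ : ℝ≥0) (B : En m →L[ℝ] En m), δ ≠ 0 ∧
          (¬ Function.Injective A → (∀ z, ‖A z‖ ≤ ‖B z‖) ∧ (∀ z, δ * ‖z‖ ≤ ‖B z‖) ∧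
            |B.det| ≤ η) := by
        intro A
        by_cases hA : Function.Injective A
        · exact ⟨1, 0, one_ne_zero, fun h => (h hA).elim⟩
        · obtain ⟨δ, B, hδ, h1, h2, h3⟩ :=
            exists_dominating_of_not_injective A hA (η := η) (by exact_mod_cast hη)
          exact ⟨⟨δ, hδ.le⟩, B, fun h => hδ.ne' (congrArg NNReal.toReal h), fun _ => ⟨h1, h2, h3⟩⟩
      choose δ B hδ hB using key
      obtain ⟨t, A, htd, htm, hst, happ, hA⟩ :=
        exists_partition_approximatesLinearOn_of_hasFDerivWithinAt F (s ∩ ball 0 R) (fderiv ℝ F)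
          (fun x hx => (hs x hx.1).hasFDerivAt.hasFDerivWithinAt) δ hδ
      have hpiece : ∀ i, μH[(m : ℝ)] (F '' (s ∩ ball 0 R ∩ t i)) ≤
          (2 : ℝ≥0) ^ (m : ℝ) * (η * μH[(m : ℝ)] (ball (0 : En m) R ∩ t i)) := by
        intro i
        rcases (s ∩ ball 0 R).eq_empty_or_nonempty with he | hne
        · simp [he]
        obtain ⟨y, hy, hAy⟩ := hA hne i
        obtain ⟨h1, h2, h3⟩ := hB (A i) (hAy ▸ hs' y hy.1)
        refine (hausdorffMeasure_image_le_of_dist_le (g := B (A i)) (K := 2) ?_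
          (Nat.cast_nonneg m)).trans ?_
        · intro x hx y hy
          have h4 : ‖F x - F y - A i (x - y)‖ ≤ δ (A i) * ‖x - y‖ := happ i x hx y hy
          have h5 := norm_le_norm_add_norm_sub' (F x - F y) (A i (x - y))
          rw [dist_eq_norm, dist_eq_norm, ← map_sub, NNReal.coe_ofNat]
          linarith [h1 (x - y), h2 (x - y)]
        · gcongr
          rw [Measure.addHaar_image_continuousLinearMap]
          gcongr
          · exact ENNReal.ofReal_le_of_le_toReal (by simpa using h3)
          · exact inter_subset_right
      calc μH[(m : ℝ)] (F '' (s ∩ ball 0 R))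
          ≤ μH[(m : ℝ)] (⋃ i, F '' (s ∩ ball 0 R ∩ t i)) := by
            rw [← image_iUnion, ← inter_iUnion, inter_eq_self_of_subset_left hst]
        _ ≤ ∑' i, μH[(m : ℝ)] (F '' (s ∩ ball 0 R ∩ t i)) := measure_iUnion_le _
        _ ≤ ∑' i, (2 : ℝ≥0) ^ (m : ℝ) * (η * μH[(m : ℝ)] (ball (0 : En m) R ∩ t i)) :=
            ENNReal.tsum_le_tsum hpiece
        _ = (2 : ℝ≥0) ^ (m : ℝ) * (η * μH[(m : ℝ)] (⋃ i, ball (0 : En m) R ∩ t i)) := by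
            rw [ENNReal.tsum_mul_left, ENNReal.tsum_mul_left, measure_iUnion
              (fun i j hij => (htd hij).mono inter_subset_right inter_subset_right)
              (fun i => measurableSet_ball.inter (htm i))]
        _ ≤ (2 : ℝ≥0) ^ (m : ℝ) * (η * μH[(m : ℝ)] (ball (0 : En m) R)) := by
            gcongr
            exact iUnion_subset fun i => inter_subset_left
        _ = C * η := by rw [hC]; ring
    refine le_antisymm (ge_of_tendsto' (x := atTop) (f := fun j : ℕ =>
      C * ((1 / ((j : ℝ≥0) + 1) : ℝ≥0) : ℝ≥0∞)) ?_ fun j => hη _ (by positivity)) zero_le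
    rw [← mul_zero C]
    refine ENNReal.Tendsto.const_mul ?_ (Or.inr hCfin)
    exact ENNReal.tendsto_coe.2 (tendsto_one_div_add_atTop_nhds_zero_nat (𝕜 := ℝ≥0))
  have hcov : F '' s ⊆ ⋃ R : ℕ, F '' (s ∩ ball 0 R) := by
    rw [← image_iUnion, ← inter_iUnion, iUnion_ball_nat, inter_univ]
  exact measure_mono_null hcov (measure_iUnion_null hbdd)

/-- A point of full density of the projection of a flat graph inside `N` has large lower
capacity density. -/
lemma not_small_capacity_of_density {m : ℕ} (hm : m ≠ 0)
    (Φ : En n ≃ₗᵢ[ℝ] WithLp 2 (En m × ℝ)) {N T : Set (En n)} (hTN : T ⊆ N)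
    (hT : ∀ p ∈ T, ∀ q ∈ T, dist p q ≤ 2 * dist (Φ p).fst (Φ q).fst) {x : En n} (hx : x ∈ T)
    (hdens : Tendsto (fun r => volume ((fun x => (Φ x).fst) '' T ∩ closedBall (Φ x).fst r) /
      volume (closedBall (Φ x).fst r)) (𝓝[>] 0) (𝓝 1)) :
    ¬ Filter.liminf (fun r : ℝ => cap1 (N ∩ ball x r) / ENNReal.ofReal (r ^ m)) (𝓝[>] 0) <
      volume (ball (0 : En m) 1) / ENNReal.ofReal ((2 * Real.sqrt 2) ^ m) := by
  intro hlt
  set θ : ℝ := ((2 / 5) * (2 * Real.sqrt 2))⁻¹ ^ m with hθ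
  have hsq : 5 / 4 < Real.sqrt 2 := Real.lt_sqrt_of_sq_lt (by norm_num)
  have hθ0 : 0 < θ := by positivity
  have hθ1 : θ < 1 := pow_lt_one₀ (by positivity) (inv_lt_one_of_one_lt₀ (by linarith)) hm
  have hscale : Tendsto (fun r : ℝ => (2 / 5) * r) (𝓝[>] 0) (𝓝[>] 0) := by
    refine tendsto_nhdsWithin_iff.2 ⟨?_, ?_⟩
    · exact tendsto_nhdsWithin_of_tendsto_nhds
        ((continuous_const.mul continuous_id).tendsto' 0 0 (by simp))
    · filter_upwards [self_mem_nhdsWithin] with r hr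
      have : (0 : ℝ) < r := hr
      exact mem_Ioi.2 (by positivity)
  have hev := (hdens.comp hscale).eventually (lt_mem_nhds
    (show ENNReal.ofReal θ < 1 from ENNReal.ofReal_lt_one.2 hθ1))
  obtain ⟨r, hcap, hr1, hr⟩ := ((frequently_lt_of_liminf_lt (by isBoundedDefault) hlt).and_eventually
    (hev.and self_mem_nhdsWithin)).exists
  have hr0 : (0 : ℝ) < r := hr
  have hsub : (fun x => (Φ x).fst) '' T ∩ closedBall (Φ x).fst ((2 / 5) * r) ⊆
      (fun x => (Φ x).fst) '' (N ∩ ball x r) := by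
    rintro _ ⟨⟨p, hp, rfl⟩, hpr⟩
    refine ⟨p, ⟨hTN hp, ?_⟩, rfl⟩
    rw [mem_closedBall] at hpr
    rw [mem_ball]
    linarith [hT p hp x hx]
  have h1 := (measure_mono hsub).trans (measure_projection_le_cap1 Φ (N ∩ ball x r))
  simp only [Function.comp_apply] at hr1
  have hb0 : volume (closedBall (Φ x).fst ((2 / 5) * r)) ≠ 0 :=
    (measure_closedBall_pos _ _ (by positivity)).ne'
  rw [ENNReal.lt_div_iff_mul_lt (Or.inl hb0) (Or.inl measure_closedBall_lt_top.ne),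
    Measure.addHaar_closedBall _ _ (by positivity), finrank_euclideanSpace_fin, ← mul_assoc,
    ← ENNReal.ofReal_mul hθ0.le] at hr1
  rw [ENNReal.div_lt_iff (Or.inl (by simpa using pow_pos hr0 m)) (Or.inl ENNReal.ofReal_ne_top),
    div_eq_mul_inv, ← ENNReal.ofReal_inv_of_pos (by positivity), mul_assoc,
    ← ENNReal.ofReal_mul (by positivity), mul_comm] at hcap
  have e : θ * ((2 / 5) * r) ^ m = ((2 * Real.sqrt 2) ^ m)⁻¹ * r ^ m := by
    rw [hθ, ← inv_pow, ← mul_pow, ← mul_pow]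
    congr 1
    field_simp
  rw [e] at hr1
  exact absurd (hr1.trans_le h1) hcap.le.not_gt

lemma hausdorffMeasure_eq_zero_of_flat {m : ℕ} (hm : m ≠ 0)
    (Φ : En n ≃ₗᵢ[ℝ] WithLp 2 (En m × ℝ)) {N T : Set (En n)} (hTN : T ⊆ N)
    (hT : ∀ p ∈ T, ∀ q ∈ T, dist p q ≤ 2 * dist (Φ p).fst (Φ q).fst)
    (h : ∀ x ∈ N,
      Filter.liminf (fun r : ℝ => cap1 (N ∩ ball x r) / ENNReal.ofReal (r ^ m)) (𝓝[>] 0) <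
        volume (ball (0 : En m) 1) / ENNReal.ofReal ((2 * Real.sqrt 2) ^ m)) :
    μH[(m : ℝ)] T = 0 := by
  set π : En n → En m := fun x => (Φ x).fst with hπ
  have hnull : volume (π '' T) = 0 := by
    have hdens := ae_iff.1 (Besicovitch.ae_tendsto_measure_inter_div volume (π '' T))
    refine le_antisymm ((measure_mono fun y hy => ?_).trans
      ((Measure.le_restrict_apply _ _).trans_eq hdens)) zero_le
    obtain ⟨x, hx, rfl⟩ := hy
    exact ⟨fun hd => not_small_capacity_of_density hm Φ hTN hT hx hd (h x (hTN hx)), x, hx, rfl⟩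
  have hH : μH[(m : ℝ)] (π '' T) = 0 :=
    Measure.absolutelyContinuous_isAddHaarMeasure (μH[(m : ℝ)]) volume hnull
  have := hausdorffMeasure_image_le_of_dist_le (f := id) (g := π) (s := T) (K := 2)
    (by simpa using hT) (Nat.cast_nonneg m)
  rw [hH, mul_zero, image_id] at this
  exact le_antisymm this zero_le

/-- Coordinates adapted to a hyperplane containing the range of a linear map. -/
lemma exists_coordinates {m : ℕ} (A : En m →L[ℝ] En (m + 1)) :
    ∃ Φ : En (m + 1) ≃ₗᵢ[ℝ] WithLp 2 (En m × ℝ), ∀ z, ‖(Φ (A z)).fst‖ = ‖A z‖ := by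
  obtain ⟨v, hv, hv1⟩ : ∃ v : En (m + 1), (∀ z, inner ℝ v (A z) = 0) ∧ ‖v‖ = 1 := by
    have hlt : LinearMap.range (A : En m →ₗ[ℝ] En (m + 1)) ≠ ⊤ := by
      intro htop
      have h1 := LinearMap.finrank_range_le (A : En m →ₗ[ℝ] En (m + 1))
      rw [htop, finrank_top] at h1
      simp at h1
    have hperp : (LinearMap.range (A : En m →ₗ[ℝ] En (m + 1)))ᗮ ≠ ⊥ := fun hbot =>
      hlt ((Submodule.orthogonal_eq_bot_iff).1 hbot)
    obtain ⟨w, hw, hw0⟩ := Submodule.exists_mem_ne_zero_of_ne_bot hperp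
    refine ⟨‖w‖⁻¹ • w, fun z => ?_, by simp [norm_smul, hw0]⟩
    have h0 : inner ℝ w (A z) = 0 :=
      Submodule.inner_left_of_mem_orthogonal (LinearMap.mem_range_self _ z) hw
    rw [inner_smul_left, h0, mul_zero]
  have hext : ∀ {E : Type} [NormedAddCommGroup E] [InnerProductSpace ℝ E] [FiniteDimensional ℝ E]
      (_ : Module.finrank ℝ E = m + 1) (w : E) (_ : ‖w‖ = 1),
      ∃ b : OrthonormalBasis (Fin (m + 1)) ℝ E, b 0 = w := by
    intro E _ _ _ hE w hw
    obtain ⟨b, hb⟩ := Orthonormal.exists_orthonormalBasis_extension_of_card_eq (𝕜 := ℝ)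
      (ι := Fin (m + 1)) (by simpa using hE) (v := fun _ => w) (s := {0})
      ⟨fun _ => hw, fun i j hij => (hij (Subsingleton.elim _ _)).elim⟩
    exact ⟨b, hb 0 rfl⟩
  obtain ⟨b, hb⟩ := hext (by simp) v hv1
  obtain ⟨b', hb'⟩ := hext (E := WithLp 2 (En m × ℝ))
    (by rw [(WithLp.linearEquiv 2 ℝ (En m × ℝ)).finrank_eq]; simp) (WithLp.toLp 2 (0, 1)) (by simp)
  refine ⟨b.equiv b' (Equiv.refl _), fun z => ?_⟩
  set Φ := b.equiv b' (Equiv.refl _) with hΦ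
  have hΦv : Φ v = WithLp.toLp 2 (0, 1) := by rw [← hb, ← hb', hΦ]; simp
  have hsnd : (Φ (A z)).snd = 0 := by
    have h1 := Φ.inner_map_map v (A z)
    rw [hv z, hΦv, WithLp.prod_inner_apply] at h1
    simpa using h1
  rw [← Φ.norm_map (A z), WithLp.prod_norm_eq_of_L2, hsnd]
  simp

/-- Images of points with injective derivative are negligible in sets of small capacity density. -/
lemma hausdorffMeasure_image_eq_zero_of_injective {m : ℕ} (hm : m ≠ 0) {N : Set (En (m + 1))}
    (h : ∀ x ∈ N,
      Filter.liminf (fun r : ℝ => cap1 (N ∩ ball x r) / ENNReal.ofReal (r ^ m)) (𝓝[>] 0) <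
        volume (ball (0 : En m) 1) / ENNReal.ofReal ((2 * Real.sqrt 2) ^ m))
    (F : En m → En (m + 1)) (s : Set (En m)) (hs : ∀ x ∈ s, DifferentiableAt ℝ F x)
    (hs' : ∀ x ∈ s, Function.Injective (fderiv ℝ F x)) (hsN : ∀ x ∈ s, F x ∈ N) :
    μH[(m : ℝ)] (F '' s) = 0 := by
  have key : ∀ A : En m →L[ℝ] En (m + 1), ∃ a : ℝ≥0, a ≠ 0 ∧
      (Function.Injective A → ∀ z, 3 * (a * ‖z‖) ≤ ‖A z‖) := by
    intro A
    by_cases hA : Function.Injective A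
    · obtain ⟨K, hK, hAK⟩ := (A : En m →ₗ[ℝ] En (m + 1)).exists_antilipschitzWith
        (LinearMap.ker_eq_bot.2 hA)
      refine ⟨(3 * K)⁻¹, by positivity, fun _ z => ?_⟩
      have h1 := hAK.le_mul_dist z 0
      simp only [map_zero, dist_zero_right, ContinuousLinearMap.coe_coe] at h1
      have hK' : (0 : ℝ) < K := hK
      rw [NNReal.coe_inv, NNReal.coe_mul, NNReal.coe_ofNat, mul_inv, mul_assoc,
        mul_inv_cancel_left₀ three_ne_zero]
      exact (inv_mul_le_iff₀ hK').2 h1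
    · exact ⟨1, one_ne_zero, fun h => (hA h).elim⟩
  choose a ha haA using key
  obtain ⟨t, A, -, -, hst, happ, hA⟩ :=
    exists_partition_approximatesLinearOn_of_hasFDerivWithinAt F s (fderiv ℝ F)
      (fun x hx => (hs x hx).hasFDerivAt.hasFDerivWithinAt) a ha
  rcases s.eq_empty_or_nonempty with rfl | hne
  · simp
  have hcov : F '' s ⊆ ⋃ i, F '' (s ∩ t i) := by
    rw [← image_iUnion, ← inter_iUnion, inter_eq_self_of_subset_left hst]
  refine measure_mono_null hcov (measure_iUnion_null fun i => ?_)
  obtain ⟨y, hy, hAy⟩ := hA hne i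
  have hinj := haA (A i) (hAy ▸ hs' y hy)
  obtain ⟨Φ, hΦ⟩ := exists_coordinates (A i)
  refine hausdorffMeasure_eq_zero_of_flat hm Φ (N := N) ?_ ?_ h
  · rintro _ ⟨x, hx, rfl⟩
    exact hsN x hx.1
  · rintro _ ⟨x, hx, rfl⟩ _ ⟨y, hy, rfl⟩
    have h1 : ‖F x - F y - A i (x - y)‖ ≤ a (A i) * ‖x - y‖ := happ i x hx y hy
    have h2 := norm_le_norm_add_norm_sub' (F x - F y) (A i (x - y))
    have h3 := norm_le_norm_add_norm_sub' (Φ (A i (x - y))).fst (Φ (F x - F y)).fst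
    have h4 : ‖(Φ (A i (x - y))).fst - (Φ (F x - F y)).fst‖ ≤ ‖F x - F y - A i (x - y)‖ := by
      rw [norm_sub_rev (F x - F y), ← Φ.norm_map (A i (x - y) - (F x - F y)),
        map_sub Φ (A i (x - y)) (F x - F y)]
      exact WithLp.norm_fst_le _ (Φ (A i (x - y)) - Φ (F x - F y))
    have h5 : (Φ (F x)).fst - (Φ (F y)).fst = (Φ (F x - F y)).fst := by rw [map_sub]; rfl
    rw [dist_eq_norm, dist_eq_norm, h5]
    linarith [hinj (x - y), hΦ (x - y)]

/-- A Borel set `N` with `liminf_{r→0} cap₁(N ∩ B(x,r))/r^{n-1} < ω_{n-1}/(2√2)^{n-1}`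
at every `x ∈ N` is purely `ℋ^{n-1}`-unrectifiable. -/
theorem purely_unrectifiable_of_small_capacity_density (hn : 2 ≤ n)
    (N : Set (En n)) (hN : MeasurableSet N)
    (h : ∀ x ∈ N,
      Filter.liminf (fun r : ℝ => cap1 (N ∩ ball x r) / ENNReal.ofReal (r ^ (n - 1)))
          (𝓝[>] 0)
        < volume (ball (0 : EuclideanSpace ℝ (Fin (n - 1))) 1)
            / ENNReal.ofReal ((2 * Real.sqrt 2) ^ (n - 1))) :
    ∀ S : Set (En n),
      (∃ F : ℕ → (EuclideanSpace ℝ (Fin (n - 1)) → En n),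
        (∀ j, ∃ L : ℝ≥0, LipschitzWith L (F j)) ∧
        μH[(n : ℝ) - 1] (S \ ⋃ j, range (F j)) = 0) →
      μH[(n : ℝ) - 1] (N ∩ S) = 0 := by
  obtain ⟨m, rfl⟩ : ∃ m, n = m + 1 := ⟨n - 1, by omega⟩
  have hm : m ≠ 0 := by omega
  have hdim : ((m + 1 : ℕ) : ℝ) - 1 = (m : ℝ) := by push_cast; ring
  simp only [Nat.add_sub_cancel] at h ⊢
  rw [hdim]
  rintro S ⟨F, hF, hS⟩
  have himage : ∀ j, μH[(m : ℝ)] (F j '' (F j ⁻¹' N)) = 0 := by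
    intro j
    obtain ⟨L, hL⟩ := hF j
    have hnull : μH[(m : ℝ)] {x : En m | ¬ DifferentiableAt ℝ (F j) x} = 0 :=
      ae_iff.1 (hL.ae_differentiableAt (μ := μH[(m : ℝ)]))
    have h1 : μH[(m : ℝ)] (F j '' {x : En m | ¬ DifferentiableAt ℝ (F j) x}) = 0 := by
      have := hL.hausdorffMeasure_image_le (Nat.cast_nonneg m)
        {x : En m | ¬ DifferentiableAt ℝ (F j) x}
      rw [hnull, mul_zero] at this
      exact le_antisymm this zero_le
    have h2 := hausdorffMeasure_image_eq_zero_of_not_injective (F j)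
      {x | DifferentiableAt ℝ (F j) x ∧ ¬ Function.Injective (fderiv ℝ (F j) x)}
      (fun x hx => hx.1) (fun x hx => hx.2)
    have h3 := hausdorffMeasure_image_eq_zero_of_injective hm h (F j)
      {x | F j x ∈ N ∧ DifferentiableAt ℝ (F j) x ∧ Function.Injective (fderiv ℝ (F j) x)}
      (fun x hx => hx.2.1) (fun x hx => hx.2.2) (fun x hx => hx.1)
    refine measure_mono_null ?_ (measure_union_null h1 (measure_union_null h2 h3))
    rw [← image_union, ← image_union]
    refine image_mono fun x hx => ?_
    by_cases hd : DifferentiableAt ℝ (F j) x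
    · by_cases hi : Function.Injective (fderiv ℝ (F j) x)
      · exact Or.inr (Or.inr ⟨hx, hd, hi⟩)
      · exact Or.inr (Or.inl ⟨hd, hi⟩)
    · exact Or.inl hd
  refine measure_mono_null ?_ (measure_union_null hS (measure_iUnion_null himage))
  rintro x ⟨hxN, hxS⟩
  by_cases hx : x ∈ ⋃ j, range (F j)
  · obtain ⟨j, z, rfl⟩ := mem_iUnion.1 hx
    exact Or.inr (mem_iUnion.2 ⟨j, z, hxN, rfl⟩)
  · exact Or.inl ⟨hxS, hx⟩

end
end
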